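/- arXiv:2408.04618 — 2 statements merged into one kernel-verified Lean document; each statement's English description precedes it below -/
import Mathlib

section
/- There exists a constant C > 0 such that the following holds. Let G be a 2-connected finite simple graph containing two longest cycles C1 and C2, and let k := |V(C1) ∩ V(C2)|. Then there exists a set T ⊆ V(G) with |T| ≤ C · k^{8/5} such that every longest cycle of G contains a vertex of T. -/
open SimpleGraph

/-- `c` is a longest cycle in `G`: it is a cycle and its length is at least
the length of every cycle in `G`. -/
def IsLongestCycle {V : Type*} (G : SimpleGraph V) {v : V} (c : G.Walk v v) : Prop :=
  c.IsCycle ∧ ∀ (u : V) (c' : G.Walk u u), c'.IsCycle → c'.length ≤ c.length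

/-- there is a path from `s` to `t` in `G` whose vertex set is exactly `W` -/
def HP {V : Type} [DecidableEq V] (G : SimpleGraph V) (W : Finset V) (s t : V) : Prop :=
  ∃ p : G.Walk s t, p.IsPath ∧ p.support.toFinset = W

section HPsec
variable {V : Type} [DecidableEq V] {G : SimpleGraph V} {W W1 W2 : Finset V} {s t u z t' : V}

lemma HP.single (v : V) : HP G {v} v v := ⟨Walk.nil, by simp, by simp⟩

lemma HP.symm (h : HP G W s t) : HP G W t s := by
  obtain ⟨p, hp, rfl⟩ := h
  exact ⟨p.reverse, hp.reverse, by simp⟩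

lemma HP.start_mem (h : HP G W s t) : s ∈ W := by
  obtain ⟨p, hp, rfl⟩ := h
  simp

lemma HP.end_mem (h : HP G W s t) : t ∈ W := h.symm.start_mem

lemma HP.append (h1 : HP G W1 s t) (ha : G.Adj t t') (h2 : HP G W2 t' u) (hd : Disjoint W1 W2) :
    HP G (W1 ∪ W2) s u := by
  obtain ⟨p, hp, rfl⟩ := h1
  obtain ⟨q, hq, rfl⟩ := h2
  refine ⟨p.append (Walk.cons ha q), ?_, ?_⟩
  · rw [Walk.isPath_def, Walk.support_append, Walk.support_cons, List.tail_cons, List.nodup_append']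
    refine ⟨hp.support_nodup, hq.support_nodup, ?_⟩
    rw [← List.disjoint_toFinset_iff_disjoint]
    exact hd
  · rw [Walk.support_append, Walk.support_cons, List.tail_cons, List.toFinset_append]

lemma HP.join (h1 : HP G W1 s t) (h2 : HP G W2 t u) (hd : ∀ z ∈ W1, z ∈ W2 → z = t) :
    HP G (W1 ∪ W2) s u := by
  obtain ⟨p, hp, rfl⟩ := h1
  obtain ⟨q, hq, rfl⟩ := h2
  refine ⟨p.append q, ?_, ?_⟩
  · rw [Walk.isPath_def, Walk.support_append, List.nodup_append']
    have hq' := hq.support_nodup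
    rw [← Walk.cons_tail_support] at hq'
    refine ⟨hp.support_nodup, (List.nodup_cons.1 hq').2, ?_⟩
    intro a ha hb
    have : a = t := hd a (by simpa using ha) (by simpa using List.mem_of_mem_tail hb)
    subst this
    exact (List.nodup_cons.1 hq').1 hb
  · ext a
    simp [Walk.mem_support_append_iff]

lemma HP.trans (h1 : HP G W1 s t) (h2 : HP G W2 t u) : ∃ W ⊆ W1 ∪ W2, HP G W s u := by
  obtain ⟨p, hp, rfl⟩ := h1
  obtain ⟨q, hq, rfl⟩ := h2
  refine ⟨_, ?_, (p.append q).bypass, Walk.bypass_isPath _, rfl⟩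
  intro a ha
  have := Walk.support_bypass_subset_support _ (List.mem_toFinset.1 ha)
  simpa [Walk.mem_support_append_iff] using this

lemma HP.left (h : HP G W s t) (hz : z ∈ W) : ∃ W' ⊆ W, HP G W' s z ∧ (z ≠ t → t ∉ W') := by
  obtain ⟨p, hp, rfl⟩ := h
  obtain ⟨q, r, hq, hr, rfl⟩ := hp.mem_support_iff_exists_append.1 (List.mem_toFinset.1 hz)
  refine ⟨_, ?_, ⟨q, hq, rfl⟩, ?_⟩
  · intro a ha
    simp only [List.mem_toFinset, Walk.mem_support_append_iff] at ha ⊢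
    exact Or.inl ha
  · intro hzt ht
    exact Walk.IsPath.ne_of_mem_support_of_append hp hzt.symm (List.mem_toFinset.1 ht)
      (Walk.end_mem_support r) rfl

lemma HP.right (h : HP G W s t) (hz : z ∈ W) : ∃ W' ⊆ W, HP G W' z t ∧ (z ≠ s → s ∉ W') := by
  obtain ⟨W', h1, h2, h3⟩ := h.symm.left hz
  exact ⟨W', h1, h2.symm, h3⟩

lemma HP.mono {G' : SimpleGraph V} (hG : G ≤ G') (h : HP G W s t) : HP G' W s t := by
  obtain ⟨p, hp, rfl⟩ := h
  exact ⟨p.mapLe hG, (Walk.isPath_mapLe hG).2 hp, by simp⟩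

lemma HP.delete {x y : V} (h : HP G W s t) (hx : x ∉ W) : HP (G.deleteEdges {s(x, y)}) W s t := by
  obtain ⟨p, hp, rfl⟩ := h
  have hh : ∀ e ∈ p.edges, e ∉ ({s(x, y)} : Set (Sym2 V)) := by
    rintro e he rfl
    exact hx (List.mem_toFinset.2 (Walk.fst_mem_support_of_mem_edges p he))
  refine ⟨p.toDeleteEdges _ hh, Walk.IsPath.toDeleteEdges G _ hp hh, ?_⟩
  simp [Walk.toDeleteEdges]

lemma HP.delete' {x y : V} (h : HP G W s t) (hx : y ∉ W) : HP (G.deleteEdges {s(x, y)}) W s t := by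
  rw [Sym2.eq_swap]
  exact h.delete hx

/-- truncate a path at the first vertex of `Z` -/
lemma HP.first (Z : V → Prop) (h : HP G W s t) (hz : ∃ z ∈ W, Z z) :
    ∃ W' ⊆ W, ∃ z, HP G W' s z ∧ Z z ∧ ∀ w ∈ W', Z w → w = z := by
  classical
  obtain ⟨n, hn⟩ : ∃ n, W.card = n := ⟨_, rfl⟩
  induction n using Nat.strong_induction_on generalizing W t with
  | _ n ih =>
    by_cases hc : ∃ z ∈ W, Z z ∧ z ≠ t
    · obtain ⟨z, hzW, hzZ, hzt⟩ := hc
      obtain ⟨W', hW', hp, ht⟩ := h.left hzW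
      have hlt : W'.card < n := by
        rw [← hn]
        exact Finset.card_lt_card ⟨hW', fun hs => ht hzt (hs h.end_mem)⟩
      obtain ⟨W'', h1, h2⟩ := ih _ hlt hp ⟨z, hp.end_mem, hzZ⟩ rfl
      exact ⟨W'', h1.trans hW', h2⟩
    · push Not at hc
      obtain ⟨z, hzW, hzZ⟩ := hz
      refine ⟨W, subset_rfl, t, h, ?_, fun w hw hZ => hc w hw hZ⟩
      rw [← hc z hzW hzZ]; exact hzZ

lemma HP.cycle (h : HP G W s t) (ha : G.Adj t s) (hc : 3 ≤ W.card) :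
    ∃ (v : V) (c : G.Walk v v), c.IsCycle ∧ c.length = W.card := by
  obtain ⟨p, hp, rfl⟩ := h
  have hl : p.support.toFinset.card = p.length + 1 := by
    rw [List.toFinset_card_of_nodup hp.support_nodup, Walk.length_support]
  refine ⟨t, Walk.cons ha p, ?_, by simp [hl]⟩
  rw [Walk.cons_isCycle_iff]
  refine ⟨hp, fun he => ?_⟩
  rw [Sym2.eq_swap] at he
  have := hp.length_eq_one_of_mem_edges he
  omega

lemma HP.of_reachable (h : G.Reachable s t) : ∃ W, HP G W s t := by
  obtain ⟨p, hp⟩ := h.exists_isPath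
  exact ⟨_, p, hp, rfl⟩

end HPsec
/-- `S` separates `A` from `B` -/
def VSep {V : Type} [DecidableEq V] (G : SimpleGraph V) (A B S : Finset V) : Prop :=
  ∀ W s t, HP G W s t → s ∈ A → t ∈ B → ∃ z ∈ W, z ∈ S

/-- there are `k` disjoint `A`-`B` paths -/
def Linked {V : Type} [DecidableEq V] (G : SimpleGraph V) (A B : Finset V) (k : ℕ) : Prop :=
  ∃ (I : Finset V) (P : V → Finset V) (s t : V → V), I.card = k ∧
    (∀ i ∈ I, HP G (P i) (s i) (t i) ∧ s i ∈ A ∧ t i ∈ B) ∧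
    ∀ i ∈ I, ∀ j ∈ I, i ≠ j → Disjoint (P i) (P j)

section Menger
variable {V : Type} [DecidableEq V] {G : SimpleGraph V} {A B S : Finset V}

lemma Linked.reindex (h : Linked G A B B.card) :
    ∃ (P : V → Finset V) (s : V → V), (∀ z ∈ B, HP G (P z) (s z) z ∧ s z ∈ A) ∧
    ∀ i ∈ B, ∀ j ∈ B, i ≠ j → Disjoint (P i) (P j) := by
  obtain ⟨I, P, s, t, hI, hP, hd⟩ := h
  have hinj : Set.InjOn t I := by
    intro i hi j hj hij
    by_contra hne
    have := Finset.disjoint_left.1 (hd i hi j hj hne) (hP i hi).1.end_mem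
    rw [hij] at this
    exact this (hP j hj).1.end_mem
  have himg : I.image t = B := by
    apply Finset.eq_of_subset_of_card_le
    · intro z hz
      obtain ⟨i, hi, rfl⟩ := Finset.mem_image.1 hz
      exact (hP i hi).2.2
    · rw [Finset.card_image_of_injOn hinj, hI]
  have hex : ∀ z, ∃ i, z ∈ B → i ∈ I ∧ t i = z := by
    intro z
    by_cases hz : z ∈ B
    · rw [← himg] at hz
      obtain ⟨i, hi, h⟩ := Finset.mem_image.1 hz
      exact ⟨i, fun _ => ⟨hi, h⟩⟩
    · exact ⟨z, fun h => absurd h hz⟩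
  choose f hf using hex
  refine ⟨fun z => P (f z), fun z => s (f z), ?_, ?_⟩
  · intro z hz
    have := hP (f z) (hf z hz).1
    rw [(hf z hz).2] at this
    exact ⟨this.1, this.2.1⟩
  · intro i hi j hj hij
    apply hd _ (hf i hi).1 _ (hf j hj).1
    intro h
    apply hij
    rw [← (hf i hi).2, ← (hf j hj).2, h]

/-- a separator of `A` from `insert x S` in the smaller graph separates `A` from `B` -/
lemma sep_lift {x y : V} (hxy : x ≠ y) (hx : VSep G A B (insert x S))
    (hy : ∀ W s, HP (G.deleteEdges {s(x, y)}) W s y → s ∈ A → ∃ z ∈ W, z ∈ S) (hyS : y ∉ S)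
    {R : Finset V} (hR : VSep (G.deleteEdges {s(x, y)}) A (insert x S) R) : VSep G A B R := by
  intro W s t hW hs ht
  obtain ⟨W', hW', z, hz, hzS, hu⟩ := hW.first (fun z => z ∈ insert x S) (hx W s t hW hs ht)
  have key : HP (G.deleteEdges {s(x, y)}) W' s z := by
    by_cases hzx : z = x
    · subst hzx
      by_cases hyW : y ∈ W'
      · exfalso
        obtain ⟨W2, h1, h2, h3⟩ := hz.left hyW
        obtain ⟨w, hw, hwS⟩ := hy W2 s (h2.delete (h3 hxy.symm)) hs
        have := hu w (h1 hw) (Finset.mem_insert_of_mem hwS)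
        subst this
        exact h3 hxy.symm hw
      · exact hz.delete' hyW
    · apply hz.delete
      intro hxW
      exact hzx (hu x hxW (Finset.mem_insert_self _ _)).symm
  obtain ⟨w, hw, hwR⟩ := hR W' s z key hs hzS
  exact ⟨w, hW' hw, hwR⟩

lemma menger_combine {x y : V} {k : ℕ} (hxy : G.Adj x y) {G' : SimpleGraph V} (hG' : G' ≤ G)
    (hS : VSep G' A B S) (hxS : x ∉ S) (hyS : y ∉ S) (hk : (insert x S).card = k)
    (hk' : (insert y S).card = k)
    (h1 : Linked G' A (insert x S) k) (h2 : Linked G' B (insert y S) k) : Linked G A B k := by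
  rw [← hk] at h1
  rw [← hk'] at h2
  obtain ⟨P, s, hP, hPd⟩ := h1.reindex
  obtain ⟨Q, t, hQ, hQd⟩ := h2.reindex
  have hPS : ∀ z ∈ insert x S, ∀ w ∈ P z, w ∈ insert x S → w = z := by
    intro z hz w hw hwS
    by_contra hne
    exact Finset.disjoint_left.1 (hPd w hwS z hz hne) (hP w hwS).1.end_mem hw
  have hQS : ∀ z ∈ insert y S, ∀ w ∈ Q z, w ∈ insert y S → w = z := by
    intro z hz w hw hwS
    by_contra hne
    exact Finset.disjoint_left.1 (hQd w hwS z hz hne) (hQ w hwS).1.end_mem hw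
  have hPQ : ∀ z ∈ insert x S, ∀ z' ∈ insert y S, ∀ w ∈ P z, w ∈ Q z' → w = z ∧ w = z' ∧ w ∈ S := by
    intro z hz z' hz' w hw hw'
    by_cases hwS : w ∈ S
    · exact ⟨hPS z hz w hw (Finset.mem_insert_of_mem hwS),
        hQS z' hz' w hw' (Finset.mem_insert_of_mem hwS), hwS⟩
    · exfalso
      obtain ⟨W1, a1, a2, a3⟩ := (hP z hz).1.left hw
      obtain ⟨W2, b1, b2, b3⟩ := (hQ z' hz').1.left hw'
      obtain ⟨W, c1, c2⟩ := a2.trans b2.symm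
      obtain ⟨r, hr, hrS⟩ := hS W _ _ c2 (hP z hz).2 (hQ z' hz').2
      rcases Finset.mem_union.1 (c1 hr) with h | h
      · have := hPS z hz r (a1 h) (Finset.mem_insert_of_mem hrS)
        subst this
        exact a3 (fun h => hwS (h ▸ hrS)) h
      · have := hQS z' hz' r (b1 h) (Finset.mem_insert_of_mem hrS)
        subst this
        exact b3 (fun h => hwS (h ▸ hrS)) h
  set σ : V → V := fun z => if z = x then y else z with hσ
  have hσx : σ x = y := by simp [hσ]
  have hσS : ∀ z ∈ S, σ z = z := by
    intro z hz
    have : z ≠ x := fun h => hxS (h ▸ hz)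
    simp [hσ, this]
  have hσm : ∀ z ∈ insert x S, σ z ∈ insert y S := by
    intro z hz
    rcases Finset.mem_insert.1 hz with rfl | h
    · simp [hσx]
    · rw [hσS z h]; exact Finset.mem_insert_of_mem h
  have hσi : ∀ z ∈ insert x S, ∀ z' ∈ insert x S, z ≠ z' → σ z ≠ σ z' := by
    intro z hz z' hz' hne
    rcases Finset.mem_insert.1 hz with rfl | h <;> rcases Finset.mem_insert.1 hz' with rfl | h'
    · exact absurd rfl hne
    · rw [hσx, hσS z' h']; rintro rfl; exact hyS h'
    · rw [hσx, hσS z h]; rintro rfl; exact hyS h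
    · rw [hσS z h, hσS z' h']; exact hne
  refine ⟨insert x S, fun z => P z ∪ Q (σ z), s, fun z => t (σ z), hk, ?_, ?_⟩
  · intro z hz
    refine ⟨?_, (hP z hz).2, (hQ _ (hσm z hz)).2⟩
    rcases Finset.mem_insert.1 hz with rfl | h
    · beta_reduce
      rw [hσx]
      refine ((hP z hz).1.mono hG').append hxy ((hQ y (by simp)).1.symm.mono hG') ?_
      rw [Finset.disjoint_left]
      intro w hw hw'
      obtain ⟨e1, e2, e3⟩ := hPQ z hz y (by simp) w hw hw'
      exact hxS (e1 ▸ e3)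
    · beta_reduce
      rw [hσS z h]
      refine ((hP z hz).1.mono hG').join ((hQ z (Finset.mem_insert_of_mem h)).1.symm.mono hG') ?_
      intro w hw hw'
      exact (hPQ z hz z (Finset.mem_insert_of_mem h) w hw hw').1
  · intro i hi j hj hij
    have hmix : ∀ i ∈ insert x S, ∀ j ∈ insert x S, i ≠ j → ∀ w ∈ P i, w ∉ Q (σ j) := by
      intro i hi j hj hij w hw hw'
      obtain ⟨e1, e2, e3⟩ := hPQ i hi _ (hσm j hj) w hw hw'
      subst e1
      rcases Finset.mem_insert.1 hj with rfl | h
      · rw [hσx] at e2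
        exact hyS (e2 ▸ e3)
      · rw [hσS j h] at e2
        exact hij e2
    rw [Finset.disjoint_left]
    intro w hw hw'
    rcases Finset.mem_union.1 hw with h | h <;> rcases Finset.mem_union.1 hw' with h' | h'
    · exact Finset.disjoint_left.1 (hPd i hi j hj hij) h h'
    · exact hmix i hi j hj hij w h h'
    · exact hmix j hj i hi hij.symm w h' h
    · exact Finset.disjoint_left.1 (hQd _ (hσm i hi) _ (hσm j hj) (hσi i hi j hj hij)) h h'

lemma sep_symm (h : VSep G A B S) : VSep G B A S := fun W s t hW hs ht => h W t s hW.symm ht hs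

theorem menger [Fintype V] (k : ℕ) (hk : ∀ S, VSep G A B S → k ≤ S.card) : Linked G A B k := by
  classical
  obtain ⟨n, hn⟩ : ∃ n, G.edgeSet.ncard = n := ⟨_, rfl⟩
  induction n using Nat.strong_induction_on generalizing G A B with
  | _ n ih =>
  by_cases hE : ∃ x y, G.Adj x y
  swap
  · push Not at hE
    have hsep : VSep G A B (A ∩ B) := by
      rintro W s t ⟨p, hp, rfl⟩ hs ht
      cases p with
      | nil => exact ⟨s, by simp, Finset.mem_inter.2 ⟨hs, ht⟩⟩
      | cons h q => exact absurd h (hE _ _)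
    obtain ⟨I, hI, hIk⟩ := Finset.exists_subset_card_eq (hk _ hsep)
    refine ⟨I, fun z => {z}, id, id, hIk, ?_, ?_⟩
    · intro i hi
      have := Finset.mem_inter.1 (hI hi)
      exact ⟨HP.single i, this.1, this.2⟩
    · intro i _ j _ hij
      simpa using hij
  obtain ⟨x, y, hxy⟩ := hE
  have hlt : (G.deleteEdges {s(x, y)}).edgeSet.ncard < n := by
    rw [← hn]
    apply Set.ncard_lt_ncard _ (Set.toFinite _)
    rw [edgeSet_deleteEdges]
    refine ⟨Set.sdiff_subset, fun h => ?_⟩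
    have := h (show s(x, y) ∈ G.edgeSet from hxy)
    simp at this
  have hle : G.deleteEdges {s(x, y)} ≤ G := deleteEdges_le _
  by_cases hS : ∀ S, VSep (G.deleteEdges {s(x, y)}) A B S → k ≤ S.card
  · obtain ⟨I, P, s, t, h1, h2, h3⟩ := ih _ hlt hS rfl
    exact ⟨I, P, s, t, h1, fun i hi => ⟨(h2 i hi).1.mono hle, (h2 i hi).2⟩, h3⟩
  push Not at hS
  obtain ⟨S, hS, hSk⟩ := hS
  -- main step with orientation
  have main : ∀ x y, G.Adj x y → (G.deleteEdges {s(x, y)}).edgeSet.ncard < n →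
      VSep (G.deleteEdges {s(x, y)}) A B S →
      (∃ W s, HP (G.deleteEdges {s(x, y)}) W s x ∧ s ∈ A ∧ ∀ z ∈ W, z ∉ S) →
      (∃ W s, HP (G.deleteEdges {s(x, y)}) W s y ∧ s ∈ B ∧ ∀ z ∈ W, z ∉ S) → Linked G A B k := by
    intro x y hxy hlt hS hAx hBy
    have hle : G.deleteEdges {s(x, y)} ≤ G := deleteEdges_le _
    have hxS : x ∉ S := by
      obtain ⟨W, s, h, _, h'⟩ := hAx
      exact h' x h.end_mem
    have hyS : y ∉ S := by
      obtain ⟨W, s, h, _, h'⟩ := hBy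
      exact h' y h.end_mem
    have nAy : ∀ W s, HP (G.deleteEdges {s(x, y)}) W s y → s ∈ A → ∃ z ∈ W, z ∈ S := by
      intro W s hW hs
      obtain ⟨W', s', h, hb, h'⟩ := hBy
      obtain ⟨U, hU, hh⟩ := hW.trans h.symm
      obtain ⟨z, hz, hzS⟩ := hS _ _ _ hh hs hb
      rcases Finset.mem_union.1 (hU hz) with h1 | h1
      · exact ⟨z, h1, hzS⟩
      · exact absurd hzS (h' z h1)
    have nBx : ∀ W s, HP (G.deleteEdges {s(x, y)}) W s x → s ∈ B → ∃ z ∈ W, z ∈ S := by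
      intro W s hW hs
      obtain ⟨W', s', h, hb, h'⟩ := hAx
      obtain ⟨U, hU, hh⟩ := hW.trans h.symm
      obtain ⟨z, hz, hzS⟩ := sep_symm hS _ _ _ hh hs hb
      rcases Finset.mem_union.1 (hU hz) with h1 | h1
      · exact ⟨z, h1, hzS⟩
      · exact absurd hzS (h' z h1)
    have sx : VSep G A B (insert x S) := by
      intro W s t hW hs ht
      by_cases hx : x ∈ W
      · exact ⟨x, hx, by simp⟩
      · obtain ⟨z, hz, hzS⟩ := hS _ _ _ (hW.delete hx) hs ht
        exact ⟨z, hz, Finset.mem_insert_of_mem hzS⟩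
    have sy : VSep G A B (insert y S) := by
      intro W s t hW hs ht
      by_cases hx : y ∈ W
      · exact ⟨y, hx, by simp⟩
      · obtain ⟨z, hz, hzS⟩ := hS _ _ _ (hW.delete' hx) hs ht
        exact ⟨z, hz, Finset.mem_insert_of_mem hzS⟩
    have cx : (insert x S).card = k := by
      have := hk _ sx
      rw [Finset.card_insert_of_notMem hxS] at this ⊢
      omega
    have cy : (insert y S).card = k := by
      have := hk _ sy
      rw [Finset.card_insert_of_notMem hyS] at this ⊢
      omega
    refine menger_combine hxy hle hS hxS hyS cx cy ?_ ?_
    · refine ih _ hlt (fun R hR => hk R ?_) rfl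
      exact sep_lift hxy.ne sx nAy hyS hR
    · refine ih _ hlt (fun R hR => hk R (sep_symm ?_)) rfl
      refine sep_lift (x := y) (y := x) hxy.ne.symm (sep_symm sy) ?_ hxS ?_
      · rw [Sym2.eq_swap]; exact nBx
      · rw [Sym2.eq_swap]; exact hR
  have hnS : ¬ VSep G A B S := fun h => by
    have := hk S h
    omega
  unfold VSep at hnS
  push Not at hnS
  obtain ⟨W, s, t, hW, hs, ht, hWS⟩ := hnS
  have hmeet : ∃ z ∈ W, z = x ∨ z = y := by
    by_contra hc
    push Not at hc
    obtain ⟨z, hz, hzS⟩ := hS W s t (hW.delete (fun h => (hc x h).1 rfl)) hs ht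
    exact hWS z hz hzS
  have getA : ∀ {A B : Finset V} {s t : V}, HP G W s t → s ∈ A →
      (∃ W s, HP (G.deleteEdges {s(x, y)}) W s x ∧ s ∈ A ∧ ∀ z ∈ W, z ∉ S) ∨
      (∃ W s, HP (G.deleteEdges {s(x, y)}) W s y ∧ s ∈ A ∧ ∀ z ∈ W, z ∉ S) := by
    intro A B s t hW hs
    obtain ⟨W', hW', z, hz, hzz, hu⟩ := hW.first (fun z => z = x ∨ z = y) hmeet
    rcases hzz with rfl | rfl
    · left
      refine ⟨W', s, hz.delete' (fun h => ?_), hs, fun z hz => hWS z (hW' hz)⟩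
      exact hxy.ne (hu y h (Or.inr rfl)).symm
    · right
      refine ⟨W', s, hz.delete (fun h => ?_), hs, fun z hz => hWS z (hW' hz)⟩
      exact hxy.ne (hu x h (Or.inl rfl))
  have nboth : ∀ z, ¬ ((∃ W s, HP (G.deleteEdges {s(x, y)}) W s z ∧ s ∈ A ∧ ∀ z ∈ W, z ∉ S) ∧
      (∃ W s, HP (G.deleteEdges {s(x, y)}) W s z ∧ s ∈ B ∧ ∀ z ∈ W, z ∉ S)) := by
    rintro z ⟨⟨W1, s1, a1, a2, a3⟩, ⟨W2, s2, b1, b2, b3⟩⟩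
    obtain ⟨U, hU, hh⟩ := a1.trans b1.symm
    obtain ⟨z, hz, hzS⟩ := hS _ _ _ hh a2 b2
    rcases Finset.mem_union.1 (hU hz) with h1 | h1
    · exact a3 z h1 hzS
    · exact b3 z h1 hzS
  rcases getA (B := B) hW hs with ha | ha <;> rcases getA (B := A) hW.symm ht with hb | hb
  · exact absurd ⟨ha, hb⟩ (nboth x)
  · exact main x y hxy hlt hS ha hb
  · rw [Sym2.eq_swap] at hlt hS ha hb
    exact main y x hxy.symm hlt hS ha hb
  · exact absurd ⟨ha, hb⟩ (nboth y)

end Menger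
lemma HP.tail {V : Type} [DecidableEq V] {G : SimpleGraph V} {W : Finset V} {s t : V}
    (h : HP G W s t) (hne : s ≠ t) : ∃ g, G.Adj s g ∧ HP G (W.erase s) g t := by
  obtain ⟨p, hp, rfl⟩ := h
  cases p with
  | nil => exact absurd rfl hne
  | cons ha q =>
    rw [Walk.cons_isPath_iff] at hp
    refine ⟨_, ha, q, hp.1, ?_⟩
    rw [Walk.support_cons, List.toFinset_cons, Finset.erase_insert]
    simpa using hp.2

/-- a cycle of length `L`, as a function on positions -/
structure Cyc {V : Type} (G : SimpleGraph V) (c : ℕ → V) (L : ℕ) : Prop where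
  three : 3 ≤ L
  adj : ∀ i, i + 1 < L → G.Adj (c i) (c (i + 1))
  close : G.Adj (c (L - 1)) (c 0)
  inj : ∀ i j, i < L → j < L → c i = c j → i = j

/-- distance of natural numbers -/
def dd (i j : ℕ) : ℕ := (i - j) + (j - i)

section CycSec
variable {V : Type} [DecidableEq V] {G : SimpleGraph V} {c : ℕ → V} {L : ℕ}

lemma Cyc.arc (h : Cyc G c L) {i j : ℕ} (hij : i ≤ j) (hj : j < L) :
    HP G ((Finset.Icc i j).image c) (c i) (c j) := by
  induction j, hij using Nat.le_induction with
  | base => simpa using HP.single (c i)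
  | succ j hij ih =>
    have h1 := (ih (by omega)).append (h.adj j hj) (HP.single (c (j + 1))) (by
      rw [Finset.disjoint_singleton_right]
      intro hm
      obtain ⟨k, hk, hk'⟩ := Finset.mem_image.1 hm
      rw [Finset.mem_Icc] at hk
      have := h.inj k (j + 1) (by omega) hj hk'
      omega)
    convert h1 using 1
    ext z
    simp only [Finset.mem_image, Finset.mem_Icc, Finset.mem_union, Finset.mem_singleton]
    constructor
    · rintro ⟨k, hk, rfl⟩
      by_cases hkj : k = j + 1
      · right; rw [hkj]
      · left; exact ⟨k, by omega, rfl⟩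
    · rintro (⟨k, hk, rfl⟩ | rfl)
      · exact ⟨k, by omega, rfl⟩
      · exact ⟨j + 1, by omega, rfl⟩

lemma Cyc.img_disj (h : Cyc G c L) {I J : Finset ℕ} (hI : ∀ i ∈ I, i < L) (hJ : ∀ i ∈ J, i < L)
    (hd : Disjoint I J) : Disjoint (I.image c) (J.image c) := by
  rw [Finset.disjoint_left]
  intro z hz hz'
  obtain ⟨i, hi, rfl⟩ := Finset.mem_image.1 hz
  obtain ⟨j, hj, hij⟩ := Finset.mem_image.1 hz'
  have := h.inj j i (hJ j hj) (hI i hi) hij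
  subst this
  exact Finset.disjoint_left.1 hd hi hj

lemma Cyc.img_card (h : Cyc G c L) {I : Finset ℕ} (hI : ∀ i ∈ I, i < L) :
    (I.image c).card = I.card :=
  Finset.card_image_of_injOn fun i hi j hj hij => h.inj i j (hI i hi) (hI j hj) hij

/-- positions of the arc going around through the base point -/
def wr (L i j : ℕ) : Finset ℕ := Finset.Icc j (L - 1) ∪ Finset.Icc 0 i

lemma wr_card {L i j : ℕ} (hij : i < j) (hj : j < L) : (wr L i j).card = L - j + (i + 1) := by
  unfold wr
  rw [Finset.card_union_of_disjoint]
  · simp; omega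
  · rw [Finset.disjoint_left]; intro k; simp only [Finset.mem_Icc]; omega

lemma Cyc.wrap (h : Cyc G c L) {i j : ℕ} (hij : i < j) (hj : j < L) :
    HP G ((wr L i j).image c) (c j) (c i) := by
  unfold wr
  rw [Finset.image_union]
  refine (h.arc (by omega) (by omega)).append h.close (h.arc (by omega) (by omega)) ?_
  apply h.img_disj
  · intro k; simp only [Finset.mem_Icc]; omega
  · intro k; simp only [Finset.mem_Icc]; omega
  · rw [Finset.disjoint_left]; intro k; simp only [Finset.mem_Icc]; omega

end CycSec

/-- two longest cycles, with disjoint connecting paths -/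
structure Conf {V : Type} [DecidableEq V] (G : SimpleGraph V) (ι : Type) where
  L : ℕ
  c1 : ℕ → V
  c2 : ℕ → V
  cyc1 : Cyc G c1 L
  cyc2 : Cyc G c2 L
  mx : ∀ (u : V) (c : G.Walk u u), c.IsCycle → c.length ≤ L
  P : ι → Finset V
  p1 : ι → ℕ
  p2 : ι → ℕ
  lt1 : ∀ e, p1 e < L
  lt2 : ∀ e, p2 e < L
  hp : ∀ e, HP G (P e) (c1 (p1 e)) (c2 (p2 e))
  disj : ∀ e f, e ≠ f → Disjoint (P e) (P f)
  on1 : ∀ e i, i < L → c1 i ∈ P e → i = p1 e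
  on2 : ∀ e i, i < L → c2 i ∈ P e → i = p2 e
  a : ℕ → ℕ
  b : ℕ → ℕ
  ma : Monotone a
  mb : Monotone b
  sep1 : ∀ e f j, p1 e ≤ j → j ≤ p1 f → a (p1 e) = a (p1 f) → ∀ i, i < L → c2 i ≠ c1 j
  sep2 : ∀ e f j, p2 e ≤ j → j ≤ p2 f → b (p2 e) = b (p2 f) → ∀ i, i < L → c1 i ≠ c2 j

namespace Conf
variable {V : Type} [DecidableEq V] {G : SimpleGraph V} {ι : Type}

/-- exchange the roles of the two cycles -/
def swap (K : Conf G ι) : Conf G ι where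
  L := K.L
  c1 := K.c2
  c2 := K.c1
  cyc1 := K.cyc2
  cyc2 := K.cyc1
  mx := K.mx
  P := K.P
  p1 := K.p2
  p2 := K.p1
  lt1 := K.lt2
  lt2 := K.lt1
  hp := fun e => (K.hp e).symm
  disj := K.disj
  on1 := K.on2
  on2 := K.on1
  a := K.b
  b := K.a
  ma := K.mb
  mb := K.ma
  sep1 := K.sep2
  sep2 := K.sep1

/-- label on the first cycle -/
def α (K : Conf G ι) (e : ι) : ℕ := K.a (K.p1 e)

/-- label on the second cycle -/
def β (K : Conf G ι) (e : ι) : ℕ := K.b (K.p2 e)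

variable (K : Conf G ι)

lemma p1_inj {e f : ι} (h : K.p1 e = K.p1 f) : e = f := by
  by_contra hne
  have := Finset.disjoint_left.1 (K.disj e f hne) (K.hp e).start_mem
  rw [h] at this
  exact this (K.hp f).start_mem

lemma p2_inj {e f : ι} (h : K.p2 e = K.p2 f) : e = f := K.swap.p1_inj h

lemma lt_of_α {e f : ι} (h : K.α e < K.α f) : K.p1 e < K.p1 f := by
  by_contra hc
  have := K.ma (not_lt.1 hc)
  unfold α at h
  omega

/-- `R` is the inside of a detour from position `p1 e` to position `p1 f` through the 2nd cycle -/
def Det (e f : ι) (R : Finset V) (g g' : V) : Prop :=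
  HP G R g g' ∧ G.Adj (K.c1 (K.p1 e)) g ∧ G.Adj g' (K.c1 (K.p1 f)) ∧
    (∀ i, i < K.L → K.c1 i ∉ R) ∧ dd (K.p2 e) (K.p2 f) + 1 ≤ R.card ∧
    ∀ z ∈ R, z ∈ K.P e ∨ z ∈ K.P f ∨ ∃ j, j < K.L ∧ K.b j = K.β e ∧ z = K.c2 j

variable {K}

lemma Det.symm {e f : ι} {R g g'} (h : K.Det e f R g g') (hb : K.β e = K.β f) :
    K.Det f e R g' g := by
  obtain ⟨h1, h2, h3, h4, h5, h6⟩ := h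
  refine ⟨h1.symm, h3.symm, h2.symm, h4, ?_, ?_⟩
  · unfold dd at h5 ⊢; omega
  · intro z hz
    rw [← hb]
    have := h6 z hz
    tauto

lemma exists_det' {e f : ι} (hne : e ≠ f) (hb : K.β e = K.β f) (hlt : K.p2 e ≤ K.p2 f) :
    ∃ R g g', K.Det e f R g g' := by
  have hs : ∀ j, K.p2 e ≤ j → j ≤ K.p2 f → ∀ i, i < K.L → K.c1 i ≠ K.c2 j :=
    fun j h1 h2 => K.sep2 e f j h1 h2 hb
  obtain ⟨g, hg, he⟩ := (K.hp e).tail (hs _ le_rfl hlt _ (K.lt1 e))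
  obtain ⟨g', hg', hf⟩ := (K.hp f).tail (hs _ hlt le_rfl _ (K.lt1 f))
  have harc := K.cyc2.arc hlt (K.lt2 f)
  have h1 := he.join harc (by
    intro z hz hz'
    obtain ⟨j, hj, rfl⟩ := Finset.mem_image.1 hz'
    rw [Finset.mem_Icc] at hj
    have := K.lt2 f
    rw [K.on2 e j (by omega) (Finset.mem_of_mem_erase hz)])
  have h2 := h1.join hf.symm (by
    intro z hz hz'
    have hzf := Finset.mem_of_mem_erase hz'
    rcases Finset.mem_union.1 hz with h | h
    · exact absurd hzf (Finset.disjoint_left.1 (K.disj e f hne) (Finset.mem_of_mem_erase h))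
    · obtain ⟨j, hj, rfl⟩ := Finset.mem_image.1 h
      rw [Finset.mem_Icc] at hj
      have := K.lt2 f
      rw [K.on2 f j (by omega) hzf])
  refine ⟨_, g, g', h2, hg, hg'.symm, ?_, ?_, ?_⟩
  · intro i hi hm
    simp only [Finset.mem_union, Finset.mem_erase, Finset.mem_image, Finset.mem_Icc] at hm
    rcases hm with (⟨h, h'⟩ | ⟨j, hj, h⟩) | ⟨h, h'⟩
    · exact h (by rw [K.on1 e i hi h'])
    · exact hs j hj.1 hj.2 i hi h.symm
    · exact h (by rw [K.on1 f i hi h'])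
  · have hc : ((Finset.Icc (K.p2 e) (K.p2 f)).image K.c2).card = K.p2 f + 1 - K.p2 e := by
      rw [K.cyc2.img_card, Nat.card_Icc]
      intro i
      have := K.lt2 f
      simp only [Finset.mem_Icc]; omega
    have : ((Finset.Icc (K.p2 e) (K.p2 f)).image K.c2).card ≤ _ := Finset.card_le_card
      (Finset.subset_union_right.trans (Finset.subset_union_left
        (s₁ := (K.P e).erase (K.c1 (K.p1 e)) ∪ (Finset.Icc (K.p2 e) (K.p2 f)).image K.c2)
        (s₂ := (K.P f).erase (K.c1 (K.p1 f)))))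
    unfold dd
    omega
  · intro z hz
    simp only [Finset.mem_union, Finset.mem_erase, Finset.mem_image, Finset.mem_Icc] at hz
    rcases hz with (⟨h, h'⟩ | ⟨j, hj, h⟩) | ⟨h, h'⟩
    · exact Or.inl h'
    · right; right
      have := K.lt2 f
      refine ⟨j, by omega, ?_, h.symm⟩
      have h1 := K.mb hj.1
      have h2 := K.mb hj.2
      unfold β at hb ⊢
      omega
    · exact Or.inr (Or.inl h')

lemma exists_det {e f : ι} (hne : e ≠ f) (hb : K.β e = K.β f) :
    ∃ R g g', K.Det e f R g g' := by
  rcases le_total (K.p2 e) (K.p2 f) with h | h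
  · exact exists_det' hne hb h
  · obtain ⟨R, g, g', hd⟩ := exists_det' hne.symm hb.symm h
    exact ⟨R, g', g, hd.symm hb.symm⟩

lemma Det.disj {e f e' f' : ι} {R g g' R' h h'} (hd : K.Det e f R g g') (hd' : K.Det e' f' R' h h')
    (hb : K.β e = K.β f) (hb' : K.β e' = K.β f') (hne : K.β e ≠ K.β e') : Disjoint R R' := by
  rw [Finset.disjoint_left]
  intro z hz hz'
  have hPP : ∀ e e', K.β e ≠ K.β e' → z ∈ K.P e → z ∈ K.P e' → False := by
    intro e e' hne h h'
    exact Finset.disjoint_left.1 (K.disj e e' (fun h => hne (h ▸ rfl))) h h'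
  have hPc : ∀ e j, j < K.L → K.b j ≠ K.β e → z ∈ K.P e → z = K.c2 j → False := by
    intro e j hj hne h h'
    subst h'
    rw [K.on2 e j hj h] at hne
    exact hne rfl
  rcases hd.2.2.2.2.2 z hz with h1 | h1 | ⟨j, hj, hjb, hjz⟩ <;>
  rcases hd'.2.2.2.2.2 z hz' with h2 | h2 | ⟨j', hj', hjb', hjz'⟩
  · exact hPP _ _ hne h1 h2
  · exact hPP _ _ (by omega) h1 h2
  · exact hPc _ j' hj' (by omega) h1 hjz'
  · exact hPP _ _ (by omega) h1 h2
  · exact hPP _ _ (by omega) h1 h2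
  · exact hPc _ j' hj' (by omega) h1 hjz'
  · exact hPc _ j hj (by omega) h2 hjz
  · exact hPc _ j hj (by omega) h2 hjz
  · have := K.cyc2.inj j j' hj hj' (hjz ▸ hjz')
    subst this
    omega

lemma img_R {I : Finset ℕ} {R : Finset V} (hI : ∀ i ∈ I, i < K.L)
    (hR : ∀ i, i < K.L → K.c1 i ∉ R) : Disjoint (I.image K.c1) R := by
  rw [Finset.disjoint_left]
  intro z hz hz'
  obtain ⟨i, hi, rfl⟩ := Finset.mem_image.1 hz
  exact hR i (hI i hi) hz'

lemma close_le {W : Finset V} {s t : V} (h : HP G W s t) (ha : G.Adj t s) (hc : 3 ≤ W.card) :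
    W.card ≤ K.L := by
  obtain ⟨v, c, hc1, hc2⟩ := h.cycle ha hc
  rw [← hc2]
  exact K.mx v c hc1

lemma HP.pos {W : Finset V} {s t : V} (h : HP G W s t) : 1 ≤ W.card :=
  Finset.card_pos.2 ⟨s, h.start_mem⟩

lemma half2 {e f : ι} (hlt : K.p1 e < K.p1 f) (hb : K.β e = K.β f) :
    dd (K.p2 e) (K.p2 f) + 2 ≤ dd (K.p1 e) (K.p1 f) := by
  have hne : e ≠ f := by rintro rfl; omega
  obtain ⟨R, g, g', hR, hg, hg', hR1, hc, -⟩ := exists_det hne hb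
  have hw := K.cyc1.wrap hlt (K.lt1 f)
  have hf := K.lt1 f
  have hI : ∀ i ∈ wr K.L (K.p1 e) (K.p1 f), i < K.L := by
    intro i; unfold wr; simp only [Finset.mem_union, Finset.mem_Icc]; omega
  have hd := img_R hI hR1
  have h1 := hw.append hg hR hd
  have hcard := wr_card hlt hf
  rw [← K.cyc1.img_card hI] at hcard
  have h2 := close_le (K := K) h1 hg'
  rw [Finset.card_union_of_disjoint hd, hcard] at h2
  have := h2 (by omega)
  unfold dd at hc ⊢
  omega

/-- closing up three outer arcs by three detours -/
lemma close3 {I1 I2 I3 : Finset ℕ} {R1 R2 R3 : Finset V} {s1 t1 s2 t2 s3 t3 g1 h1 g2 h2 g3 h3 : V}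
    (hI1 : ∀ i ∈ I1, i < K.L) (hI2 : ∀ i ∈ I2, i < K.L) (hI3 : ∀ i ∈ I3, i < K.L)
    (d12 : Disjoint I1 I2) (d13 : Disjoint I1 I3) (d23 : Disjoint I2 I3)
    (hR1 : ∀ i, i < K.L → K.c1 i ∉ R1) (hR2 : ∀ i, i < K.L → K.c1 i ∉ R2)
    (hR3 : ∀ i, i < K.L → K.c1 i ∉ R3)
    (r12 : Disjoint R1 R2) (r13 : Disjoint R1 R3) (r23 : Disjoint R2 R3)
    (o1 : HP G (I1.image K.c1) s1 t1) (a1 : G.Adj t1 g1) (q1 : HP G R1 g1 h1) (b1 : G.Adj h1 s2)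
    (o2 : HP G (I2.image K.c1) s2 t2) (a2 : G.Adj t2 g2) (q2 : HP G R2 g2 h2) (b2 : G.Adj h2 s3)
    (o3 : HP G (I3.image K.c1) s3 t3) (a3 : G.Adj t3 g3) (q3 : HP G R3 g3 h3) (b3 : G.Adj h3 s1) :
    I1.card + I2.card + I3.card + R1.card + R2.card + R3.card ≤ K.L := by
  have e12 := K.cyc1.img_disj hI1 hI2 d12
  have e13 := K.cyc1.img_disj hI1 hI3 d13
  have e23 := K.cyc1.img_disj hI2 hI3 d23
  have D1 := img_R hI1 hR1
  have D2 := img_R hI2 hR2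
  have D3 := img_R hI3 hR3
  have D12 : Disjoint (I1.image K.c1 ∪ R1) (I2.image K.c1 ∪ R2) := by
    simp only [Finset.disjoint_union_left, Finset.disjoint_union_right]
    exact ⟨⟨e12, (img_R hI2 hR1).symm⟩, img_R hI1 hR2, r12⟩
  have D123 : Disjoint ((I1.image K.c1 ∪ R1) ∪ (I2.image K.c1 ∪ R2)) (I3.image K.c1 ∪ R3) := by
    simp only [Finset.disjoint_union_left, Finset.disjoint_union_right]
    exact ⟨⟨⟨e13, (img_R hI3 hR1).symm⟩, ⟨e23, (img_R hI3 hR2).symm⟩⟩,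
      ⟨img_R hI1 hR3, r13⟩, img_R hI2 hR3, r23⟩
  have H := ((o1.append a1 q1 D1).append b1 (o2.append a2 q2 D2) D12).append b2
    (o3.append a3 q3 D3) D123
  have := close_le (K := K) H b3
  have c1 := HP.pos o1
  have c2 := HP.pos o2
  have c3 := HP.pos o3
  rw [Finset.card_union_of_disjoint D123, Finset.card_union_of_disjoint D12,
    Finset.card_union_of_disjoint D1, Finset.card_union_of_disjoint D2,
    Finset.card_union_of_disjoint D3, K.cyc1.img_card hI1, K.cyc1.img_card hI2,
    K.cyc1.img_card hI3] at this
  rw [K.cyc1.img_card hI1] at c1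
  rw [K.cyc1.img_card hI2] at c2
  rw [K.cyc1.img_card hI3] at c3
  have := this (by omega)
  omega

lemma close2 {I1 I2 : Finset ℕ} {R1 R2 : Finset V} {s1 t1 s2 t2 g1 h1 g2 h2 : V}
    (hI1 : ∀ i ∈ I1, i < K.L) (hI2 : ∀ i ∈ I2, i < K.L)
    (d12 : Disjoint I1 I2)
    (hR1 : ∀ i, i < K.L → K.c1 i ∉ R1) (hR2 : ∀ i, i < K.L → K.c1 i ∉ R2)
    (r12 : Disjoint R1 R2)
    (o1 : HP G (I1.image K.c1) s1 t1) (a1 : G.Adj t1 g1) (q1 : HP G R1 g1 h1) (b1 : G.Adj h1 s2)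
    (o2 : HP G (I2.image K.c1) s2 t2) (a2 : G.Adj t2 g2) (q2 : HP G R2 g2 h2) (b2 : G.Adj h2 s1) :
    I1.card + I2.card + R1.card + R2.card ≤ K.L := by
  have e12 := K.cyc1.img_disj hI1 hI2 d12
  have D1 := img_R hI1 hR1
  have D2 := img_R hI2 hR2
  have D12 : Disjoint (I1.image K.c1 ∪ R1) (I2.image K.c1 ∪ R2) := by
    simp only [Finset.disjoint_union_left, Finset.disjoint_union_right]
    exact ⟨⟨e12, (img_R hI2 hR1).symm⟩, img_R hI1 hR2, r12⟩
  have H := (o1.append a1 q1 D1).append b1 (o2.append a2 q2 D2) D12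
  have := close_le (K := K) H b2
  have c1 := HP.pos o1
  have c2 := HP.pos o2
  have c3 := HP.pos q1
  rw [Finset.card_union_of_disjoint D12,
    Finset.card_union_of_disjoint D1, Finset.card_union_of_disjoint D2,
    K.cyc1.img_card hI1, K.cyc1.img_card hI2] at this
  rw [K.cyc1.img_card hI1] at c1
  rw [K.cyc1.img_card hI2] at c2
  have := this (by omega)
  omega

lemma ne_of_α {e f : ι} (h : K.α e ≠ K.α f) : e ≠ f := fun h' => h (h' ▸ rfl)

lemma half4_core {e11 e12 e21 e22 : ι} (l1 : K.p1 e11 < K.p1 e12) (l2 : K.p1 e12 < K.p1 e21)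
    (l3 : K.p1 e21 < K.p1 e22) (b1 : K.β e11 = K.β e21) (b2 : K.β e12 = K.β e22)
    (b12 : K.β e11 ≠ K.β e12) :
    dd (K.p2 e11) (K.p2 e21) + dd (K.p2 e12) (K.p2 e22) + 4 ≤
      dd (K.p1 e11) (K.p1 e12) + dd (K.p1 e21) (K.p1 e22) := by
  obtain ⟨R1, g1, h1, d1⟩ := exists_det (K := K) (e := e21) (f := e11)
    (by rintro rfl; omega) b1.symm
  obtain ⟨R2, g2, h2, d2⟩ := exists_det (K := K) (e := e22) (f := e12)
    (by rintro rfl; omega) b2.symm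
  have r12 := d1.disj d2 b1.symm b2.symm (by omega)
  obtain ⟨q1, x1, y1, z1, w1, -⟩ := d1
  obtain ⟨q2, x2, y2, z2, w2, -⟩ := d2
  have hL := K.lt1 e22
  have := close2 (K := K) (I1 := Finset.Icc (K.p1 e12) (K.p1 e21))
    (I2 := wr K.L (K.p1 e11) (K.p1 e22))
    (by intro i; simp only [Finset.mem_Icc]; omega)
    (by intro i; unfold wr; simp only [Finset.mem_union, Finset.mem_Icc]; omega)
    (by rw [Finset.disjoint_left]; intro i; unfold wr
        simp only [Finset.mem_union, Finset.mem_Icc]; omega)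
    z1 z2 r12 (K.cyc1.arc (by omega) (by omega)) x1 q1 y1
    (K.cyc1.wrap (by omega) (by omega)).symm x2 q2 y2
  rw [wr_card (by omega) hL, Nat.card_Icc] at this
  unfold dd at *
  omega

lemma half4 {e11 e12 e21 e22 : ι} (a1 : K.α e11 = K.α e12) (a2 : K.α e21 = K.α e22)
    (a12 : K.α e11 ≠ K.α e21) (b1 : K.β e11 = K.β e21) (b2 : K.β e12 = K.β e22)
    (b12 : K.β e11 ≠ K.β e12) (h : K.p1 e11 < K.p1 e12 ↔ K.p1 e21 < K.p1 e22) :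
    dd (K.p2 e11) (K.p2 e21) + dd (K.p2 e12) (K.p2 e22) + 4 ≤
      dd (K.p1 e11) (K.p1 e12) + dd (K.p1 e21) (K.p1 e22) := by
  have n1 : K.p1 e11 ≠ K.p1 e12 := fun h => b12 (by rw [K.p1_inj h])
  have n2 : K.p1 e21 ≠ K.p1 e22 := fun h => b12 (by rw [b1, b2, K.p1_inj h])
  rcases lt_or_gt_of_ne n1 with l1 | l1 <;> rcases lt_or_gt_of_ne a12 with l | l
  · exact half4_core l1 (K.lt_of_α (by omega)) (h.1 l1) b1 b2 b12
  · have := half4_core (h.1 l1) (K.lt_of_α (by omega)) l1 b1.symm b2.symm (by omega)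
    unfold dd at *; omega
  · have := half4_core l1 (K.lt_of_α (by omega)) (by omega) b2 b1 b12.symm
    unfold dd at *; omega
  · have := half4_core (K := K) (e11 := e22) (e12 := e21) (e21 := e12) (e22 := e11)
      (by omega) (K.lt_of_α (by omega)) l1 b2.symm b1.symm (by omega)
    unfold dd at *; omega

lemma half6_core {f1 f2 g1 g2 h1 h2 : ι} (a0 : K.α f1 = K.α f2) (a1 : K.α g1 = K.α h1)
    (a2 : K.α g2 = K.α h2) (b1 : K.β f1 = K.β g1) (b2 : K.β f2 = K.β g2) (b3 : K.β h1 = K.β h2)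
    (na1 : K.α f1 ≠ K.α g1) (na2 : K.α f1 ≠ K.α g2) (na3 : K.α g1 ≠ K.α g2)
    (nb1 : K.β f1 ≠ K.β f2) (nb2 : K.β f1 ≠ K.β h1) (nb3 : K.β f2 ≠ K.β h1)
    (H1 : K.p1 g1 < K.p1 h1 ↔ K.p1 g2 < K.p1 h2) (H2 : K.α g1 < K.α f1 ↔ K.α g2 < K.α f1)
    (H3 : K.p1 f1 < K.p1 f2) (H4 : K.α g1 < K.α g2) :
    dd (K.p2 f1) (K.p2 g1) + dd (K.p2 f2) (K.p2 g2) + dd (K.p2 h1) (K.p2 h2) + 6 ≤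
      dd (K.p1 f1) (K.p1 f2) + dd (K.p1 g1) (K.p1 h1) + dd (K.p1 g2) (K.p1 h2) := by
  obtain ⟨R1, u1, v1, d1⟩ := exists_det (K := K) (e := g1) (f := f1) (ne_of_α na1.symm) b1.symm
  obtain ⟨R2, u2, v2, d2⟩ := exists_det (K := K) (e := g2) (f := f2) (ne_of_α (K := K) (by omega)) b2.symm
  obtain ⟨R3, u3, v3, d3⟩ := exists_det (K := K) (e := h2) (f := h1) (ne_of_α (K := K) (by omega)) b3.symm
  have r12 := d1.disj d2 b1.symm b2.symm (by omega)
  have r13 := d1.disj d3 b1.symm b3.symm (by omega)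
  have r23 := d2.disj d3 b2.symm b3.symm (by omega)
  obtain ⟨q1, x1, y1, z1, w1, -⟩ := d1
  obtain ⟨q2, x2, y2, z2, w2, -⟩ := d2
  obtain ⟨q3, x3, y3, z3, w3, -⟩ := d3
  have lf1 := K.lt1 f1
  have lf2 := K.lt1 f2
  have lg1 := K.lt1 g1
  have lg2 := K.lt1 g2
  have lh1 := K.lt1 h1
  have lh2 := K.lt1 h2
  have n1 : K.p1 g1 ≠ K.p1 h1 := fun h => by
    have := K.p1_inj h
    subst this
    omega
  have n2 : K.p1 g2 ≠ K.p1 h2 := fun h => by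
    have := K.p1_inj h
    subst this
    omega
  have m1 : K.p1 g1 < K.p1 g2 := K.lt_of_α (by omega)
  have m2 : K.p1 g1 < K.p1 h2 := K.lt_of_α (by omega)
  have m3 : K.p1 h1 < K.p1 g2 := K.lt_of_α (by omega)
  have m4 : K.p1 h1 < K.p1 h2 := K.lt_of_α (by omega)
  by_cases hc : K.α g1 < K.α f1
  · have hc2 := H2.1 hc
    have k1 : K.p1 g2 < K.p1 f1 := K.lt_of_α (by omega)
    have k2 : K.p1 h2 < K.p1 f1 := K.lt_of_α (by omega)
    rcases lt_or_gt_of_ne n1 with l | l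
    · have l' := H1.1 l
      -- order g1 h1 g2 h2 f1 f2
      have := close3 (K := K) (I1 := wr K.L (K.p1 g1) (K.p1 f2))
        (I2 := Finset.Icc (K.p1 h2) (K.p1 f1)) (I3 := Finset.Icc (K.p1 h1) (K.p1 g2))
        (by intro i; unfold wr; simp only [Finset.mem_union, Finset.mem_Icc]; omega)
        (by intro i; simp only [Finset.mem_Icc]; omega)
        (by intro i; simp only [Finset.mem_Icc]; omega)
        (by rw [Finset.disjoint_left]; intro i; unfold wr
            simp only [Finset.mem_union, Finset.mem_Icc]; omega)
        (by rw [Finset.disjoint_left]; intro i; unfold wr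
            simp only [Finset.mem_union, Finset.mem_Icc]; omega)
        (by rw [Finset.disjoint_left]; intro i; simp only [Finset.mem_Icc]; omega)
        z1 z3 z2 r13 r12 r23.symm
        (K.cyc1.wrap (by omega) (by omega)) x1 q1 y1
        (K.cyc1.arc (by omega) (by omega)).symm x3 q3 y3
        (K.cyc1.arc (by omega) (by omega)) x2 q2 y2
      rw [wr_card (by omega) (by omega), Nat.card_Icc, Nat.card_Icc] at this
      unfold dd at *
      omega
    · have l' : K.p1 h2 < K.p1 g2 := by omega
      -- order h1 g1 h2 g2 f1 f2
      have := close3 (K := K) (I1 := wr K.L (K.p1 h1) (K.p1 f2))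
        (I2 := Finset.Icc (K.p1 g1) (K.p1 h2)) (I3 := Finset.Icc (K.p1 g2) (K.p1 f1))
        (by intro i; unfold wr; simp only [Finset.mem_union, Finset.mem_Icc]; omega)
        (by intro i; simp only [Finset.mem_Icc]; omega)
        (by intro i; simp only [Finset.mem_Icc]; omega)
        (by rw [Finset.disjoint_left]; intro i; unfold wr
            simp only [Finset.mem_union, Finset.mem_Icc]; omega)
        (by rw [Finset.disjoint_left]; intro i; unfold wr
            simp only [Finset.mem_union, Finset.mem_Icc]; omega)
        (by rw [Finset.disjoint_left]; intro i; simp only [Finset.mem_Icc]; omega)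
        z3 z1 z2 r13.symm r23.symm r12
        (K.cyc1.wrap (by omega) (by omega)) y3.symm q3.symm x3.symm
        (K.cyc1.arc (by omega) (by omega)).symm x1 q1 y1
        (K.cyc1.arc (by omega) (by omega)).symm x2 q2 y2
      rw [wr_card (by omega) (by omega), Nat.card_Icc, Nat.card_Icc] at this
      unfold dd at *
      omega
  · have hc2 : ¬ K.α g2 < K.α f1 := fun h => hc (H2.2 h)
    have k1 : K.p1 f2 < K.p1 g1 := K.lt_of_α (by omega)
    have k2 : K.p1 f2 < K.p1 h1 := K.lt_of_α (by omega)
    rcases lt_or_gt_of_ne n1 with l | l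
    · have l' := H1.1 l
      -- order f1 f2 g1 h1 g2 h2
      have := close3 (K := K) (I1 := Finset.Icc (K.p1 f2) (K.p1 g1))
        (I2 := wr K.L (K.p1 f1) (K.p1 h2)) (I3 := Finset.Icc (K.p1 h1) (K.p1 g2))
        (by intro i; simp only [Finset.mem_Icc]; omega)
        (by intro i; unfold wr; simp only [Finset.mem_union, Finset.mem_Icc]; omega)
        (by intro i; simp only [Finset.mem_Icc]; omega)
        (by rw [Finset.disjoint_left]; intro i; unfold wr
            simp only [Finset.mem_union, Finset.mem_Icc]; omega)
        (by rw [Finset.disjoint_left]; intro i; simp only [Finset.mem_Icc]; omega)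
        (by rw [Finset.disjoint_left]; intro i; unfold wr
            simp only [Finset.mem_union, Finset.mem_Icc]; omega)
        z1 z3 z2 r13 r12 r23.symm
        (K.cyc1.arc (by omega) (by omega)) x1 q1 y1
        (K.cyc1.wrap (by omega) (by omega)).symm x3 q3 y3
        (K.cyc1.arc (by omega) (by omega)) x2 q2 y2
      rw [wr_card (by omega) (by omega), Nat.card_Icc, Nat.card_Icc] at this
      unfold dd at *
      omega
    · have l' : K.p1 h2 < K.p1 g2 := by omega
      -- order f1 f2 h1 g1 h2 g2
      have := close3 (K := K) (I1 := Finset.Icc (K.p1 f2) (K.p1 h1))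
        (I2 := Finset.Icc (K.p1 g1) (K.p1 h2)) (I3 := wr K.L (K.p1 f1) (K.p1 g2))
        (by intro i; simp only [Finset.mem_Icc]; omega)
        (by intro i; simp only [Finset.mem_Icc]; omega)
        (by intro i; unfold wr; simp only [Finset.mem_union, Finset.mem_Icc]; omega)
        (by rw [Finset.disjoint_left]; intro i; simp only [Finset.mem_Icc]; omega)
        (by rw [Finset.disjoint_left]; intro i; unfold wr
            simp only [Finset.mem_union, Finset.mem_Icc]; omega)
        (by rw [Finset.disjoint_left]; intro i; unfold wr
            simp only [Finset.mem_union, Finset.mem_Icc]; omega)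
        z3 z1 z2 r13.symm r23.symm r12
        (K.cyc1.arc (by omega) (by omega)) y3.symm q3.symm x3.symm
        (K.cyc1.arc (by omega) (by omega)).symm x1 q1 y1
        (K.cyc1.wrap (by omega) (by omega)).symm x2 q2 y2
      rw [wr_card (by omega) (by omega), Nat.card_Icc, Nat.card_Icc] at this
      unfold dd at *
      omega

lemma half6 {f1 f2 g1 g2 h1 h2 : ι} (a0 : K.α f1 = K.α f2) (a1 : K.α g1 = K.α h1)
    (a2 : K.α g2 = K.α h2) (b1 : K.β f1 = K.β g1) (b2 : K.β f2 = K.β g2) (b3 : K.β h1 = K.β h2)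
    (na1 : K.α f1 ≠ K.α g1) (na2 : K.α f1 ≠ K.α g2) (na3 : K.α g1 ≠ K.α g2)
    (nb1 : K.β f1 ≠ K.β f2) (nb2 : K.β f1 ≠ K.β h1) (nb3 : K.β f2 ≠ K.β h1)
    (H1 : K.p1 g1 < K.p1 h1 ↔ K.p1 g2 < K.p1 h2) (H2 : K.α g1 < K.α f1 ↔ K.α g2 < K.α f1)
    (H3 : K.p1 f1 < K.p1 f2 ↔ K.α g1 < K.α g2) :
    dd (K.p2 f1) (K.p2 g1) + dd (K.p2 f2) (K.p2 g2) + dd (K.p2 h1) (K.p2 h2) + 6 ≤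
      dd (K.p1 f1) (K.p1 f2) + dd (K.p1 g1) (K.p1 h1) + dd (K.p1 g2) (K.p1 h2) := by
  have n1 : K.p1 f1 ≠ K.p1 f2 := fun h => nb1 (by rw [K.p1_inj h])
  rcases lt_or_gt_of_ne n1 with l | l
  · exact half6_core a0 a1 a2 b1 b2 b3 na1 na2 na3 nb1 nb2 nb3 H1 H2 l (H3.1 l)
  · have hg : K.α g2 < K.α g1 := by omega
    have := half6_core (K := K) (f1 := f2) (f2 := f1) (g1 := g2) (g2 := g1) (h1 := h2) (h2 := h1)
      a0.symm a2 a1 b2 b1 b3.symm (by omega) (by omega) na3.symm nb1.symm (by omega) (by omega)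
      H1.symm (by rw [← a0]; exact H2.symm) l hg
    unfold dd at *
    omega

/-- two different connections do not have the same pair of labels -/
lemma simple {e f : ι} (ha : K.α e = K.α f) (hb : K.β e = K.β f) : e = f := by
  by_contra hne
  have n1 : K.p1 e ≠ K.p1 f := fun h => hne (K.p1_inj h)
  have n2 : K.p2 e ≠ K.p2 f := fun h => hne (K.p2_inj h)
  have h1 : dd (K.p2 e) (K.p2 f) + 2 ≤ dd (K.p1 e) (K.p1 f) := by
    rcases lt_or_gt_of_ne n1 with l | l
    · exact half2 l hb
    · have := half2 l hb.symm
      unfold dd at *; omega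
  have h2 : dd (K.p1 e) (K.p1 f) + 2 ≤ dd (K.p2 e) (K.p2 f) := by
    rcases lt_or_gt_of_ne n2 with l | l
    · exact half2 (K := K.swap) l ha
    · have := half2 (K := K.swap) l ha.symm
      unfold dd at *
      change (K.p1 f - K.p1 e) + (K.p1 e - K.p1 f) + 2 ≤ (K.p2 f - K.p2 e) + (K.p2 e - K.p2 f) at this
      omega
  omega

lemma no4 {e11 e12 e21 e22 : ι} (a1 : K.α e11 = K.α e12) (a2 : K.α e21 = K.α e22)
    (a12 : K.α e11 ≠ K.α e21) (b1 : K.β e11 = K.β e21) (b2 : K.β e12 = K.β e22)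
    (b12 : K.β e11 ≠ K.β e12) (h : K.p1 e11 < K.p1 e12 ↔ K.p1 e21 < K.p1 e22)
    (h' : K.p2 e11 < K.p2 e21 ↔ K.p2 e12 < K.p2 e22) : False := by
  have h1 := half4 a1 a2 a12 b1 b2 b12 h
  have h2 := half4 (K := K.swap) (e11 := e11) (e12 := e21) (e21 := e12) (e22 := e22)
    b1 b2 b12 a1 a2 a12 h'
  change dd (K.p1 e11) (K.p1 e12) + dd (K.p1 e21) (K.p1 e22) + 4 ≤
      dd (K.p2 e11) (K.p2 e21) + dd (K.p2 e12) (K.p2 e22) at h2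
  omega

lemma no6 {f1 f2 g1 g2 h1 h2 : ι} (a0 : K.α f1 = K.α f2) (a1 : K.α g1 = K.α h1)
    (a2 : K.α g2 = K.α h2) (b1 : K.β f1 = K.β g1) (b2 : K.β f2 = K.β g2) (b3 : K.β h1 = K.β h2)
    (na1 : K.α f1 ≠ K.α g1) (na2 : K.α f1 ≠ K.α g2) (na3 : K.α g1 ≠ K.α g2)
    (nb1 : K.β g1 ≠ K.β g2) (nb2 : K.β g1 ≠ K.β h1) (nb3 : K.β g2 ≠ K.β h1)
    (H1 : K.p1 g1 < K.p1 h1 ↔ K.p1 g2 < K.p1 h2) (H2 : K.α g1 < K.α f1 ↔ K.α g2 < K.α f1)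
    (H3 : K.p1 f1 < K.p1 f2 ↔ K.α g1 < K.α g2)
    (H1' : K.p2 g1 < K.p2 f1 ↔ K.p2 g2 < K.p2 f2) (H2' : K.β g1 < K.β h1 ↔ K.β g2 < K.β h1)
    (H3' : K.p2 h1 < K.p2 h2 ↔ K.β g1 < K.β g2) : False := by
  have e1 := half6 a0 a1 a2 b1 b2 b3 na1 na2 na3 (by omega) (by omega) (by omega) H1 H2 H3
  have e2 := half6 (K := K.swap) (f1 := h1) (f2 := h2) (g1 := g1) (g2 := g2) (h1 := f1) (h2 := f2)
    b3 b1.symm b2.symm a1.symm a2.symm a0 nb2.symm nb3.symm nb1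
    (by change K.α h1 ≠ K.α h2; omega) (by change K.α h1 ≠ K.α f1; omega)
    (by change K.α h2 ≠ K.α f1; omega) H1' H2' H3'
  change dd (K.p1 h1) (K.p1 g1) + dd (K.p1 h2) (K.p1 g2) + dd (K.p1 f1) (K.p1 f2) + 6 ≤
      dd (K.p2 h1) (K.p2 h2) + dd (K.p2 g1) (K.p2 f1) + dd (K.p2 g2) (K.p2 f2) at e2
  unfold dd at *
  omega

end Conf
namespace Conf
variable {V : Type} [DecidableEq V] {G : SimpleGraph V} {ι : Type} (K : Conf G ι)

lemma no32 {g1 g2 h1 h2 k1 k2 : ι} (a1 : K.α h1 = K.α g1) (a1' : K.α k1 = K.α g1)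
    (a2 : K.α h2 = K.α g2) (a2' : K.α k2 = K.α g2) (na : K.α g1 ≠ K.α g2)
    (bg : K.β g1 = K.β g2) (bh : K.β h1 = K.β h2) (bk : K.β k1 = K.β k2)
    (n1 : K.β h1 ≠ K.β k1) (n2 : K.β h1 ≠ K.β g1) (n3 : K.β k1 ≠ K.β g1)
    (o1 : K.p1 h1 < K.p1 k1 ↔ K.p1 h2 < K.p1 k2)
    (o2 : K.p1 h1 < K.p1 g1 ↔ K.p1 h2 < K.p1 g2)
    (o3 : K.p1 k1 < K.p1 g1 ↔ K.p1 k2 < K.p1 g2) : False := by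
  have e1 := K.no4 (e11 := h1) (e12 := k1) (e21 := h2) (e22 := k2) (by omega) (by omega) (by omega)
    bh bk n1 o1
  have e2 := K.no4 (e11 := h1) (e12 := g1) (e21 := h2) (e22 := g2) (by omega) (by omega) (by omega)
    bh bg n2 o2
  have e3 := K.no4 (e11 := k1) (e12 := g1) (e21 := k2) (e22 := g2) (by omega) (by omega) (by omega)
    bk bg n3 o3
  tauto

lemma flip1 {a b c d : ι} (h1 : K.β a ≠ K.β b) (h2 : K.β c ≠ K.β d)
    (h : K.p1 a < K.p1 b ↔ K.p1 c < K.p1 d) : K.p1 b < K.p1 a ↔ K.p1 d < K.p1 c := by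
  have y1 : K.p1 a ≠ K.p1 b := fun h => h1 (K.p1_inj h ▸ rfl)
  have y2 : K.p1 c ≠ K.p1 d := fun h => h2 (K.p1_inj h ▸ rfl)
  omega

lemma no_both {g1 g2 f1 f2 f1' f2' h1 h2 h1' h2' : ι}
    (bf1 : K.β f1 = K.β g1) (bf1' : K.β f1' = K.β g1)
    (bf2 : K.β f2 = K.β g2) (bf2' : K.β f2' = K.β g2)
    (ah1 : K.α h1 = K.α g1) (ah1' : K.α h1' = K.α g1)
    (ah2 : K.α h2 = K.α g2) (ah2' : K.α h2' = K.α g2)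
    (af : K.α f1 = K.α f2) (af' : K.α f1' = K.α f2') (bh : K.β h1 = K.β h2) (bh' : K.β h1' = K.β h2')
    (nf : K.α f1 ≠ K.α f1') (nf1 : K.α f1 ≠ K.α g1) (nf1' : K.α f1' ≠ K.α g1)
    (nf2 : K.α f1 ≠ K.α g2) (nf2' : K.α f1' ≠ K.α g2)
    (nh : K.β h1 ≠ K.β h1') (nh1 : K.β h1 ≠ K.β g1) (nh1' : K.β h1' ≠ K.β g1)
    (nh2 : K.β h1 ≠ K.β g2) (nh2' : K.β h1' ≠ K.β g2)
    (na : K.α g1 ≠ K.α g2) (nb : K.β g1 ≠ K.β g2)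
    (o1 : K.p2 f1 < K.p2 f1' ↔ K.p2 f2 < K.p2 f2')
    (o2 : K.p2 f1 < K.p2 g1 ↔ K.p2 f2 < K.p2 g2)
    (o3 : K.p2 f1' < K.p2 g1 ↔ K.p2 f2' < K.p2 g2)
    (q1 : K.p1 h1 < K.p1 h1' ↔ K.p1 h2 < K.p1 h2')
    (q2 : K.p1 h1 < K.p1 g1 ↔ K.p1 h2 < K.p1 g2)
    (q3 : K.p1 h1' < K.p1 g1 ↔ K.p1 h2' < K.p1 g2)
    (r1 : K.α g1 < K.α f1 ↔ K.α g2 < K.α f1) (r2 : K.α g1 < K.α f1' ↔ K.α g2 < K.α f1')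
    (s1 : K.β g1 < K.β h1 ↔ K.β g2 < K.β h1) (s2 : K.β g1 < K.β h1' ↔ K.β g2 < K.β h1') :
    False := by
  have hF : ¬ ((K.p1 f1 < K.p1 f2) ↔ (K.p1 f1' < K.p1 f2')) := by
    intro h
    exact K.no4 (e11 := f1) (e12 := f2) (e21 := f1') (e22 := f2') af af' nf (bf1.trans bf1'.symm)
      (bf2.trans bf2'.symm) (by rw [bf1, bf2]; exact nb) h o1
  have hH : ¬ ((K.p2 h1 < K.p2 h2) ↔ (K.p2 h1' < K.p2 h2')) := by
    intro h
    exact K.no4 (e11 := h1) (e12 := h1') (e21 := h2) (e22 := h2') (ah1.trans ah1'.symm)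
      (ah2.trans ah2'.symm) (by rw [ah1, ah2]; exact na) bh bh' nh q1 h
  have fin : ∀ F1 F2 H1 H2 : ι, K.α F1 = K.α F2 → K.β F1 = K.β g1 → K.β F2 = K.β g2 →
      K.α H1 = K.α g1 → K.α H2 = K.α g2 → K.β H1 = K.β H2 →
      K.α F1 ≠ K.α g1 → K.α F1 ≠ K.α g2 → K.β H1 ≠ K.β g1 → K.β H1 ≠ K.β g2 →
      (K.p1 H1 < K.p1 g1 ↔ K.p1 H2 < K.p1 g2) → (K.p2 F1 < K.p2 g1 ↔ K.p2 F2 < K.p2 g2) →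
      (K.α g1 < K.α F1 ↔ K.α g2 < K.α F1) → (K.β g1 < K.β H1 ↔ K.β g2 < K.β H1) →
      (K.p1 F1 < K.p1 F2 ↔ K.α g1 < K.α g2) → (K.p2 H1 < K.p2 H2 ↔ K.β g1 < K.β g2) → False := by
    intro F1 F2 H1 H2 t1 t2 t3 t4 t5 t6 t7 t8 t9 t10 t11 t12 t13 t14 t15 t16
    exact K.no6 (f1 := F1) (f2 := F2) (g1 := g1) (g2 := g2) (h1 := H1) (h2 := H2) t1 t4.symm
      t5.symm t2 t3 t6 t7 t8 na nb (Ne.symm t9) (Ne.symm t10)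
      (K.flip1 t9 (t6 ▸ t10) t11) t13 t15 (K.swap.flip1 t7 (t1 ▸ t8 : K.α F2 ≠ K.α g2) t12) t14 t16
  have hF' : (K.p1 f1 < K.p1 f2 ↔ K.α g1 < K.α g2) ∨ (K.p1 f1' < K.p1 f2' ↔ K.α g1 < K.α g2) := by
    clear * - hF
    tauto
  have hH' : (K.p2 h1 < K.p2 h2 ↔ K.β g1 < K.β g2) ∨ (K.p2 h1' < K.p2 h2' ↔ K.β g1 < K.β g2) := by
    clear * - hH
    tauto
  rcases hF' with A | A <;> rcases hH' with B | B
  · exact fin f1 f2 h1 h2 af bf1 bf2 ah1 ah2 bh nf1 nf2 nh1 nh2 q2 o2 r1 s1 A B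
  · exact fin f1 f2 h1' h2' af bf1 bf2 ah1' ah2' bh' nf1 nf2 nh1' nh2' q3 o2 r1 s2 A B
  · exact fin f1' f2' h1 h2 af' bf1' bf2' ah1 ah2 bh nf1' nf2' nh1 nh2 q2 o3 r2 s1 A B
  · exact fin f1' f2' h1' h2' af' bf1' bf2' ah1' ah2' bh' nf1' nf2' nh1' nh2' q3 o3 r2 s2 A B

/-- pairs of connections on the second side -/
def prs [Fintype ι] [DecidableEq ι] (w : ι → ℕ) (g : ι) : Finset (ι × ι) :=
  ((Finset.univ.filter (fun e => w e = w g)).erase g).offDiag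

lemma mem_prs [Fintype ι] [DecidableEq ι] (w : ι → ℕ) (g : ι) (q : ι × ι) :
    q ∈ prs w g ↔ (q.1 ≠ g ∧ w q.1 = w g) ∧ (q.2 ≠ g ∧ w q.2 = w g) ∧ q.1 ≠ q.2 := by
  unfold prs
  simp [Finset.mem_offDiag]

/-- the set of tuples that are counted -/
def tup [Fintype ι] [DecidableEq ι] : Finset (Σ _ : ι, (ι × ι) × (ι × ι)) :=
  Finset.univ.sigma (fun g => prs K.β g ×ˢ prs K.α g)

/-- the code of a tuple -/
def code (x : Σ _ : ι, (ι × ι) × (ι × ι)) :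
    (ℕ × ℕ × ℕ × ℕ) × (Bool × Bool × Bool × Bool × Bool) × (Bool × Bool × Bool × Bool × Bool) :=
  ((K.α x.2.1.1, K.α x.2.1.2, K.β x.2.2.1, K.β x.2.2.2),
   (decide (K.p2 x.2.1.1 < K.p2 x.2.1.2), decide (K.p2 x.2.1.1 < K.p2 x.1),
    decide (K.p2 x.2.1.2 < K.p2 x.1), decide (K.α x.1 < K.α x.2.1.1), decide (K.α x.1 < K.α x.2.1.2)),
   (decide (K.p1 x.2.2.1 < K.p1 x.2.2.2), decide (K.p1 x.2.2.1 < K.p1 x.1),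
    decide (K.p1 x.2.2.2 < K.p1 x.1), decide (K.β x.1 < K.β x.2.2.1), decide (K.β x.1 < K.β x.2.2.2)))

lemma code_inj [Fintype ι] [DecidableEq ι] : Set.InjOn K.code (K.tup : Set _) := by
  rintro ⟨g1, ⟨f1, f1'⟩, ⟨h1, h1'⟩⟩ m1 ⟨g2, ⟨f2, f2'⟩, ⟨h2, h2'⟩⟩ m2 h
  simp only [tup, Finset.coe_sigma, Set.mem_sigma_iff, Finset.mem_coe, Finset.mem_univ,
    Finset.mem_product, mem_prs, true_and] at m1 m2
  obtain ⟨⟨⟨x1, bf1⟩, ⟨x1', bf1'⟩, x1''⟩, ⟨y1, ah1⟩, ⟨y1', ah1'⟩, y1''⟩ := m1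
  obtain ⟨⟨⟨x2, bf2⟩, ⟨x2', bf2'⟩, x2''⟩, ⟨y2, ah2⟩, ⟨y2', ah2'⟩, y2''⟩ := m2
  simp only [code, Prod.mk.injEq, decide_eq_decide] at h
  obtain ⟨⟨af, af', bh, bh'⟩, ⟨o1, o2, o3, r1, r2⟩, q1, q2, q3, s1, s2⟩ := h
  have sA : ∀ a b : ι, a ≠ b → K.β a = K.β b → K.α a ≠ K.α b := fun a b h h1 h2 => h (K.simple h2 h1)
  have sB : ∀ a b : ι, a ≠ b → K.α a = K.α b → K.β a ≠ K.β b := fun a b h h1 h2 => h (K.simple h1 h2)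
  have nf := sA _ _ x1'' (by omega)
  have nf1 := sA _ _ x1 bf1
  have nf1' := sA _ _ x1' bf1'
  have nf2 := sA _ _ x2 bf2
  have nf2' := sA _ _ x2' bf2'
  have nh := sB _ _ y1'' (by omega)
  have nh1 := sB _ _ y1 ah1
  have nh1' := sB _ _ y1' ah1'
  have nh2 := sB _ _ y2 ah2
  have nh2' := sB _ _ y2' ah2'
  by_cases na : K.α g1 = K.α g2 <;> by_cases nb : K.β g1 = K.β g2
  · obtain rfl := K.simple na nb
    obtain rfl := K.simple af (bf1.trans bf2.symm)
    obtain rfl := K.simple af' (bf1'.trans bf2'.symm)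
    obtain rfl := K.simple (ah1.trans ah2.symm) bh
    obtain rfl := K.simple (ah1'.trans ah2'.symm) bh'
    rfl
  · exact (K.swap.no32 (g1 := g1) (g2 := g2) (h1 := f1) (h2 := f2) (k1 := f1') (k2 := f2')
      bf1 bf1' bf2 bf2' nb na af af' nf nf1 nf1' o1 o2 o3).elim
  · exact (K.no32 (g1 := g1) (g2 := g2) (h1 := h1) (h2 := h2) (k1 := h1') (k2 := h2')
      ah1 ah1' ah2 ah2' na nb bh bh' nh nh1 nh1' q1 q2 q3).elim
  · rw [← af] at r1
    rw [← af'] at r2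
    rw [← bh] at s1
    rw [← bh'] at s2
    exact (K.no_both bf1 bf1' bf2 bf2' ah1 ah1' ah2 ah2' af af' bh bh' nf nf1 nf1' (af ▸ nf2)
      (af' ▸ nf2') nh nh1 nh1' (bh ▸ nh2) (bh' ▸ nh2') na nb o1 o2 o3 q1 q2 q3 r1 r2 s1 s2).elim

lemma tup_card [Fintype ι] [DecidableEq ι] {n : ℕ} (hα : ∀ e, K.α e < n) (hβ : ∀ e, K.β e < n) :
    K.tup.card ≤ 1024 * n ^ 4 := by
  let R := Finset.range n
  have : K.tup.card ≤ ((R ×ˢ R ×ˢ R ×ˢ R) ×ˢ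
      (Finset.univ : Finset ((Bool × Bool × Bool × Bool × Bool) × (Bool × Bool × Bool × Bool × Bool)))).card := by
    refine Finset.card_le_card_of_injOn K.code ?_ K.code_inj
    intro x hx
    simp [code, R, hα, hβ]
  refine this.trans (le_of_eq ?_)
  simp [Finset.card_product, R]
  ring

lemma bad_card [Fintype ι] (w : ι → ℕ) {n : ℕ} (hn : 0 < n) (hw : ∀ e, w e < n) :
    4 * (Finset.univ.filter (fun g => 4 * n * (Finset.univ.filter (fun e => w e = w g)).card <
      Fintype.card ι)).card ≤ Fintype.card ι := by
  classical
  set B := Finset.univ.filter (fun g => 4 * n * (Finset.univ.filter (fun e => w e = w g)).card <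
      Fintype.card ι) with hB
  have h1 : B.card = ∑ x ∈ Finset.range n, (B.filter (fun e => w e = x)).card :=
    Finset.card_eq_sum_card_fiberwise (by intro e _; simp [hw])
  have h2 : ∑ x ∈ Finset.range n, 4 * n * (B.filter (fun e => w e = x)).card ≤
      ∑ x ∈ Finset.range n, Fintype.card ι := by
    refine Finset.sum_le_sum fun x _ => ?_
    rcases (B.filter (fun e => w e = x)).eq_empty_or_nonempty with he | ⟨g, hg⟩
    · simp [he]
    · rw [Finset.mem_filter] at hg
      have hg1 := hg.1
      rw [hB, Finset.mem_filter] at hg1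
      refine le_trans ?_ hg1.2.le
      refine Nat.mul_le_mul_left _ (Finset.card_le_card ?_)
      intro e he
      rw [Finset.mem_filter] at he ⊢
      exact ⟨Finset.mem_univ _, he.2.trans hg.2.symm⟩
  rw [← Finset.mul_sum, ← h1] at h2
  simp only [Finset.sum_const, Finset.card_range, smul_eq_mul] at h2
  have : n * (4 * B.card) ≤ n * Fintype.card ι := by linarith
  exact Nat.le_of_mul_le_mul_left this hn

lemma prs_card [Fintype ι] [DecidableEq ι] (w : ι → ℕ) (g : ι) {n : ℕ} (hn : 0 < n)
    (hm : 16 * n ≤ Fintype.card ι)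
    (hg : Fintype.card ι ≤ 4 * n * (Finset.univ.filter (fun e => w e = w g)).card) :
    (Fintype.card ι) ^ 2 ≤ 64 * n ^ 2 * (prs w g).card := by
  unfold prs
  rw [Finset.offDiag_card, Finset.card_erase_of_mem (by simp)]
  set d := (Finset.univ.filter (fun e => w e = w g)).card
  have hd : 4 ≤ d := by
    have : 4 * n * 4 ≤ 4 * n * d := by omega
    exact Nat.le_of_mul_le_mul_left this (by omega)
  obtain ⟨c, hc⟩ := Nat.exists_eq_add_of_le hd
  have : (d - 1) * (d - 1) - (d - 1) = (c + 3) * (c + 2) := by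
    have e : d - 1 = c + 3 := by omega
    rw [e]
    apply Nat.sub_eq_of_eq_add
    ring
  rw [this]
  calc (Fintype.card ι) ^ 2 ≤ (4 * n * d) ^ 2 := Nat.pow_le_pow_left hg 2
    _ = 16 * n ^ 2 * d ^ 2 := by ring
    _ ≤ 16 * n ^ 2 * (4 * ((c + 3) * (c + 2))) := by
        refine Nat.mul_le_mul_left _ ?_
        rw [hc]
        nlinarith
    _ = _ := by ring

theorem count [Fintype ι] {n : ℕ} (hn : 0 < n) (hα : ∀ e, K.α e < n)
    (hβ : ∀ e, K.β e < n) : (Fintype.card ι) ^ 5 ≤ 2 ^ 23 * n ^ 8 := by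
  classical
  set m := Fintype.card ι with hm
  rcases lt_or_ge m (16 * n) with h | h
  · calc m ^ 5 ≤ (16 * n) ^ 5 := Nat.pow_le_pow_left h.le 5
      _ = 2 ^ 20 * n ^ 5 := by ring
      _ ≤ 2 ^ 23 * n ^ 8 := Nat.mul_le_mul (by norm_num) (Nat.pow_le_pow_right hn (by norm_num))
  · set B1 := Finset.univ.filter (fun g => 4 * n * (Finset.univ.filter (fun e => K.α e = K.α g)).card <
      Fintype.card ι) with hB1
    set B2 := Finset.univ.filter (fun g => 4 * n * (Finset.univ.filter (fun e => K.β e = K.β g)).card <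
      Fintype.card ι) with hB2
    have b1 : 4 * B1.card ≤ m := bad_card K.α hn hα
    have b2 : 4 * B2.card ≤ m := bad_card K.β hn hβ
    have hG : m ≤ 2 * ((B1 ∪ B2)ᶜ).card := by
      have := Finset.card_union_le B1 B2
      have := Finset.card_compl_add_card (B1 ∪ B2)
      omega
    have ht : ((B1 ∪ B2)ᶜ).card * m ^ 4 ≤ 4096 * n ^ 4 * K.tup.card := by
      unfold tup
      rw [Finset.card_sigma, Finset.mul_sum]
      calc ((B1 ∪ B2)ᶜ).card * m ^ 4 = ∑ g ∈ (B1 ∪ B2)ᶜ, m ^ 4 := by simp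
        _ ≤ ∑ g ∈ (B1 ∪ B2)ᶜ, 4096 * n ^ 4 * (prs K.β g ×ˢ prs K.α g).card := by
            refine Finset.sum_le_sum fun g hg => ?_
            rw [Finset.mem_compl, Finset.mem_union, hB1, hB2, Finset.mem_filter, Finset.mem_filter] at hg
            push Not at hg
            have e1 := prs_card K.α g hn h (hg.1 (Finset.mem_univ _))
            have e2 := prs_card K.β g hn h (hg.2 (Finset.mem_univ _))
            rw [Finset.card_product]
            calc m ^ 4 = m ^ 2 * m ^ 2 := by ring
              _ ≤ _ := Nat.mul_le_mul e1 e2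
              _ = _ := by ring
        _ ≤ _ := Finset.sum_le_sum_of_subset (Finset.subset_univ _)
    have hc := K.tup_card hα hβ
    calc m ^ 5 = m * m ^ 4 := by ring
      _ ≤ (2 * ((B1 ∪ B2)ᶜ).card) * m ^ 4 := Nat.mul_le_mul_right _ hG
      _ = 2 * (((B1 ∪ B2)ᶜ).card * m ^ 4) := by ring
      _ ≤ 2 * (4096 * n ^ 4 * (1024 * n ^ 4)) := 
          Nat.mul_le_mul_left _ (ht.trans (Nat.mul_le_mul_left _ hc))
      _ = _ := by ring

end Conf
section Final
variable {V : Type} [DecidableEq V] {G : SimpleGraph V}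

/-- number of vertices of `X` among the first positions of a cycle -/
def cnt (c : ℕ → V) (L : ℕ) (X : Finset V) (j : ℕ) : ℕ :=
  ((Finset.range (j + 1)).filter (fun i => i < L ∧ c i ∈ X)).card

lemma cnt_mono (c : ℕ → V) (L : ℕ) (X : Finset V) : Monotone (cnt c L X) := by
  intro i j hij
  refine Finset.card_le_card (Finset.filter_subset_filter _ ?_)
  intro x hx
  simp only [Finset.mem_range] at *
  omega

lemma cnt_lt {c : ℕ → V} {L : ℕ} {X : Finset V} {i j l : ℕ} (hij : i < j) (hjl : j ≤ l) (hj : j < L)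
    (hX : c j ∈ X) : cnt c L X i < cnt c L X l := by
  refine lt_of_lt_of_le (b := cnt c L X j) ?_ (cnt_mono c L X hjl)
  refine Finset.card_lt_card ⟨Finset.filter_subset_filter _ ?_, fun h => ?_⟩
  · intro x hx
    simp only [Finset.mem_range] at *
    omega
  · have : j ∈ (Finset.range (i + 1)).filter (fun i => i < L ∧ c i ∈ X) := h (by simp [hj, hX])
    simp at this
    omega

lemma cnt_le {c : ℕ → V} {L : ℕ} {X : Finset V} (h : Cyc G c L) (j : ℕ) : cnt c L X j ≤ X.card := by
  refine Finset.card_le_card_of_injOn c ?_ ?_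
  · intro i hi
    simp only [Finset.coe_filter, Set.mem_ofPred_eq] at hi
    exact hi.2.2
  · intro i hi i' hi' he
    simp only [Finset.coe_filter, Set.mem_ofPred_eq] at hi hi'
    exact h.inj i i' hi.2.1 hi'.2.1 he

theorem link_bound {c1 c2 : ℕ → V} {L N : ℕ} (h1 : Cyc G c1 L) (h2 : Cyc G c2 L)
    (mx : ∀ (u : V) (c : G.Walk u u), c.IsCycle → c.length ≤ L) {A B : Finset V}
    (hA : A = (Finset.range L).image c1) (hB : B = (Finset.range L).image c2)
    (hl : Linked G A B N) :
    ∃ m, N ≤ (A ∩ B).card + m ∧ m ^ 5 ≤ 2 ^ 23 * ((A ∩ B).card + 1) ^ 8 ∧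
      ((A ∩ B).card = 0 → m ≤ 1) := by
  obtain ⟨I, P, s, t, hI, hP, hd⟩ := hl
  set X := A ∩ B with hX
  have mA : ∀ i, i < L → c1 i ∈ A := fun i hi => by
    rw [hA]; exact Finset.mem_image_of_mem _ (Finset.mem_range.2 hi)
  have mB : ∀ i, i < L → c2 i ∈ B := fun i hi => by
    rw [hB]; exact Finset.mem_image_of_mem _ (Finset.mem_range.2 hi)
  have eA : ∀ x ∈ A, ∃ i, i < L ∧ c1 i = x := fun x hx => by
    rw [hA, Finset.mem_image] at hx
    obtain ⟨i, hi, h⟩ := hx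
    exact ⟨i, Finset.mem_range.1 hi, h⟩
  have eB : ∀ x ∈ B, ∃ i, i < L ∧ c2 i = x := fun x hx => by
    rw [hB, Finset.mem_image] at hx
    obtain ⟨i, hi, h⟩ := hx
    exact ⟨i, Finset.mem_range.1 hi, h⟩
  let J := I.filter (fun i => Disjoint (P i) X)
  have hIJ : (I \ J).card ≤ X.card := by
    have hx : ∀ i ∈ I \ J, ∃ x ∈ P i, x ∈ X := by
      intro i hi
      simp only [J, Finset.mem_sdiff, Finset.mem_filter, not_and] at hi
      exact Finset.not_disjoint_iff.1 (hi.2 hi.1)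
    choose! x hx1 hx2 using hx
    refine Finset.card_le_card_of_injOn x (fun i hi => hx2 i hi) ?_
    intro i hi j hj he
    by_contra hne
    have := hd i (Finset.mem_sdiff.1 hi).1 j (Finset.mem_sdiff.1 hj).1 hne
    refine Finset.disjoint_left.1 this (hx1 i hi) ?_
    rw [he]
    exact hx1 j hj
  have hN : N ≤ X.card + J.card := by
    have : (I \ J).card + J.card = I.card :=
      Finset.card_sdiff_add_card_eq_card (Finset.filter_subset _ I)
    omega
  have ex : ∀ e : {i // i ∈ J}, ∃ (W : Finset V) (q1 q2 : ℕ), W ⊆ P e.1 ∧ q1 < L ∧ q2 < L ∧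
      HP G W (c1 q1) (c2 q2) ∧ (∀ w ∈ W, w ∈ A → w = c1 q1) ∧ (∀ w ∈ W, w ∈ B → w = c2 q2) := by
    rintro ⟨e, he⟩
    obtain ⟨hp, hs, ht⟩ := hP e (Finset.mem_filter.1 he).1
    obtain ⟨W, hW, z, hz, hzB, hz1⟩ := hp.first (fun x => x ∈ B) ⟨_, hp.end_mem, ht⟩
    obtain ⟨W', hW', y, hy, hyA, hy1⟩ := hz.symm.first (fun x => x ∈ A) ⟨_, hz.start_mem, hs⟩
    obtain ⟨q1, hq1, rfl⟩ := eA y hyA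
    obtain ⟨q2, hq2, rfl⟩ := eB z hzB
    exact ⟨W', q1, q2, hW'.trans hW, hq1, hq2, hy.symm, hy1, fun w hw => hz1 w (hW' hw)⟩
  choose W q1 q2 hW hq1 hq2 hp on1 on2 using ex
  have hJX : ∀ e : {i // i ∈ J}, ∀ x ∈ W e, x ∉ X := fun e x hx =>
    Finset.disjoint_left.1 (Finset.mem_filter.1 e.2).2 (hW e hx)
  let K : Conf G {i // i ∈ J} :=
    { L := L, c1 := c1, c2 := c2, cyc1 := h1, cyc2 := h2, mx := mx, P := W, p1 := q1, p2 := q2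
      lt1 := hq1, lt2 := hq2, hp := hp
      disj := fun e f hne => by
        refine Finset.disjoint_of_subset_left (hW e) (Finset.disjoint_of_subset_right (hW f) ?_)
        exact hd _ (Finset.mem_filter.1 e.2).1 _ (Finset.mem_filter.1 f.2).1
          (fun h => hne (Subtype.ext h))
      on1 := fun e i hi h => h1.inj _ _ hi (hq1 e) (on1 e _ h (mA i hi))
      on2 := fun e i hi h => h2.inj _ _ hi (hq2 e) (on2 e _ h (mB i hi))
      a := cnt c1 L X
      b := cnt c2 L X
      ma := cnt_mono _ _ _
      mb := cnt_mono _ _ _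
      sep1 := fun e f j hj hj' ha i hi he => by
        have hjL : j < L := lt_of_le_of_lt hj' (hq1 f)
        have hjX : c1 j ∈ X := Finset.mem_inter.2 ⟨mA j hjL, he ▸ mB i hi⟩
        have hne : q1 e ≠ j := fun h => hJX e _ (hp e).start_mem (h ▸ hjX)
        exact absurd ha (cnt_lt (lt_of_le_of_ne hj hne) hj' hjL hjX).ne
      sep2 := fun e f j hj hj' ha i hi he => by
        have hjL : j < L := lt_of_le_of_lt hj' (hq2 f)
        have hjX : c2 j ∈ X := Finset.mem_inter.2 ⟨he ▸ mA i hi, mB j hjL⟩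
        have hne : q2 e ≠ j := fun h => hJX e _ (hp e).end_mem (h ▸ hjX)
        exact absurd ha (cnt_lt (lt_of_le_of_ne hj hne) hj' hjL hjX).ne }
  have hα : ∀ e, K.α e ≤ X.card := fun e => cnt_le h1 _
  have hβ : ∀ e, K.β e ≤ X.card := fun e => cnt_le h2 _
  have hc : Fintype.card {i // i ∈ J} = J.card := by simp
  refine ⟨J.card, hN, ?_, ?_⟩
  · rw [← hc]
    exact K.count (Nat.succ_pos _) (fun e => Nat.lt_succ_of_le (hα e))
      (fun e => Nat.lt_succ_of_le (hβ e))
  · intro h0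
    rw [← hc, Fintype.card_le_one_iff]
    intro e f
    have := hα e
    have := hα f
    have := hβ e
    have := hβ f
    exact K.simple (by omega) (by omega)

lemma Cyc.of_walk {u : V} {c : G.Walk u u} (h : c.IsCycle) : Cyc G c.getVert c.length where
  three := h.three_le_length
  adj := fun i hi => c.adj_getVert_succ (by omega)
  close := by
    have h3 := h.three_le_length
    have := c.adj_getVert_succ (i := c.length - 1) (by omega)
    rw [Nat.sub_add_cancel (by omega), Walk.getVert_length] at this
    simpa using this
  inj := fun i j hi hj he => h.getVert_injOn' (by simp; omega) (by simp; omega) he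

lemma supp_eq {u : V} {c : G.Walk u u} (h : c.IsCycle) :
    c.support.toFinset = (Finset.range c.length).image c.getVert := by
  have h3 := h.three_le_length
  ext x
  simp only [List.mem_toFinset, Finset.mem_image, Finset.mem_range,
    Walk.mem_support_iff_exists_getVert]
  constructor
  · rintro ⟨i, hi, hl⟩
    rcases hl.lt_or_eq with h' | h'
    · exact ⟨i, h', hi⟩
    · refine ⟨0, by omega, ?_⟩
      rw [← hi, h']
      simp
  · rintro ⟨i, hi, h'⟩
    exact ⟨i, h', hi.le⟩

lemma sep_two [Fintype V] (h2 : ∀ w : V, (G.induce ({w}ᶜ : Set V)).Connected) {A B S : Finset V}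
    (hA : 2 ≤ A.card) (hB : 2 ≤ B.card) (hS : VSep G A B S) : 2 ≤ S.card := by
  by_contra hc
  obtain ⟨a0, ha0⟩ : A.Nonempty := Finset.card_pos.1 (by omega)
  obtain ⟨w, hw⟩ : ∃ w, S ⊆ {w} := by
    rcases S.eq_empty_or_nonempty with h | ⟨w, hw⟩
    · exact ⟨a0, by simp [h]⟩
    · refine ⟨w, fun x hx => ?_⟩
      rw [Finset.mem_singleton]
      exact Finset.card_le_one.1 (by omega) x hx w hw
  obtain ⟨a, ha, haw⟩ := Finset.exists_mem_ne (by omega : 1 < A.card) w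
  obtain ⟨b, hb, hbw⟩ := Finset.exists_mem_ne (by omega : 1 < B.card) w
  obtain ⟨p⟩ := (h2 w).preconnected ⟨a, by simpa using haw⟩ ⟨b, by simpa using hbw⟩
  let q : G.Walk a b := p.map (Embedding.induce ({w}ᶜ : Set V)).toHom
  obtain ⟨z, hz, hzS⟩ := hS q.bypass.support.toFinset a b ⟨q.bypass, Walk.bypass_isPath _, rfl⟩ ha hb
  have hz' : z ∈ q.support := Walk.support_bypass_subset_support _ (List.mem_toFinset.1 hz)
  have hzw : z = w := by simpa using hw hzS
  have hq : q.support = p.support.map (Embedding.induce ({w}ᶜ : Set V)).toHom := Walk.support_map _ _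
  rw [hq] at hz'
  obtain ⟨y, hy, hyz⟩ := List.mem_map.1 hz'
  have := y.2
  exact this (hyz.trans hzw)

lemma longest_len {u v : V} {c1 : G.Walk u u} {c2 : G.Walk v v} (h1 : IsLongestCycle G c1)
    (h2 : IsLongestCycle G c2) : c1.length = c2.length :=
  le_antisymm (h2.2 _ _ h1.1) (h1.2 _ _ h2.1)

lemma supp_card {u : V} {c : G.Walk u u} (h : c.IsCycle) : 3 ≤ c.support.toFinset.card := by
  rw [supp_eq h, (Cyc.of_walk h).img_card (by simp), Finset.card_range]
  exact h.three_le_length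

lemma walk_bound {u v : V} {c1 : G.Walk u u} {c2 : G.Walk v v} (h1 : IsLongestCycle G c1)
    (h2 : IsLongestCycle G c2) {N : ℕ} (hl : Linked G c1.support.toFinset c2.support.toFinset N) :
    ∃ m, N ≤ (c1.support.toFinset ∩ c2.support.toFinset).card + m ∧
      m ^ 5 ≤ 2 ^ 23 * ((c1.support.toFinset ∩ c2.support.toFinset).card + 1) ^ 8 ∧
      ((c1.support.toFinset ∩ c2.support.toFinset).card = 0 → m ≤ 1) := by
  have e := longest_len h1 h2
  refine link_bound (Cyc.of_walk h1.1) (c2 := c2.getVert) ?_ h1.2 (supp_eq h1.1) ?_ hl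
  · rw [e]; exact Cyc.of_walk h2.1
  · rw [e]; exact supp_eq h2.1

lemma meet [Fintype V] (hG : ∀ w : V, (G.induce ({w}ᶜ : Set V)).Connected)
    {u v : V} {c1 : G.Walk u u} {c2 : G.Walk v v} (h1 : IsLongestCycle G c1)
    (h2 : IsLongestCycle G c2) : 0 < (c1.support.toFinset ∩ c2.support.toFinset).card := by
  by_contra h0
  have h3 := supp_card h1.1
  have h4 := supp_card h2.1
  have hl := menger (G := G) (A := c1.support.toFinset) (B := c2.support.toFinset) 2
    (fun S hS => sep_two hG (by omega) (by omega) hS)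
  obtain ⟨m, a, -, b⟩ := walk_bound h1 h2 hl
  have := b (by omega)
  omega

lemma real_bound {N k m : ℕ} (hk : 0 < k) (hN : N ≤ k + m) (hm : m ^ 5 ≤ 2 ^ 23 * (k + 1) ^ 8) :
    (N : ℝ) ≤ 100 * (k : ℝ) ^ ((8 : ℝ) / 5) := by
  have hk1 : (1 : ℝ) ≤ k := by exact_mod_cast hk
  set r := (k : ℝ) ^ ((8 : ℝ) / 5) with hr
  have hr0 : 0 ≤ r := by positivity
  have hrk : (k : ℝ) ≤ r := by
    have := Real.rpow_le_rpow_of_exponent_le hk1 (show (1 : ℝ) ≤ 8 / 5 by norm_num)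
    simpa using this
  have hr5 : r ^ 5 = (k : ℝ) ^ 8 := by
    rw [hr, ← Real.rpow_natCast, ← Real.rpow_mul (by positivity), ← Real.rpow_natCast]
    norm_num
  have hm' : (m : ℝ) ^ 5 ≤ (99 * r) ^ 5 := by
    rw [mul_pow, hr5]
    have h2 : m ^ 5 ≤ 2 ^ 31 * k ^ 8 := by
      calc m ^ 5 ≤ 2 ^ 23 * (k + 1) ^ 8 := hm
        _ ≤ 2 ^ 23 * (2 * k) ^ 8 := Nat.mul_le_mul_left _ (Nat.pow_le_pow_left (by omega) 8)
        _ = _ := by ring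
    have h3 : (m : ℝ) ^ 5 ≤ 2 ^ 31 * (k : ℝ) ^ 8 := by exact_mod_cast h2
    refine h3.trans (mul_le_mul_of_nonneg_right (by norm_num) (by positivity))
  have hm2 : (m : ℝ) ≤ 99 * r := le_of_pow_le_pow_left₀ (by norm_num) (by positivity) hm'
  have hN' : (N : ℝ) ≤ k + m := by exact_mod_cast hN
  linarith

lemma cyc_link {u : V} {c : G.Walk u u} (h : c.IsCycle) {x y : V} (hx : x ∈ c.support.toFinset)
    (hy : y ∈ c.support.toFinset) : ∃ W ⊆ c.support.toFinset, HP G W x y := by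
  have hc := Cyc.of_walk h
  rw [supp_eq h] at *
  rw [Finset.mem_image] at hx hy
  obtain ⟨i, hi, rfl⟩ := hx
  obtain ⟨j, hj, rfl⟩ := hy
  rw [Finset.mem_range] at hi hj
  rcases le_total i j with l | l
  · refine ⟨_, Finset.image_subset_image ?_, hc.arc l hj⟩
    intro z hz
    simp at *
    omega
  · refine ⟨_, Finset.image_subset_image ?_, (hc.arc l hi).symm⟩
    intro z hz
    simp at *
    omega

end Final

theorem longest_cycle_transversal_bound :
    ∃ C : ℝ, 0 < C ∧
      ∀ (V : Type) [Fintype V] [DecidableEq V] (G : SimpleGraph V),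
        -- `G` is 2-connected:
        2 < Fintype.card V →
        (∀ w : V, (G.induce ({w}ᶜ : Set V)).Connected) →
        ∀ (u v : V) (c1 : G.Walk u u) (c2 : G.Walk v v),
          IsLongestCycle G c1 → IsLongestCycle G c2 →
          ∀ k : ℕ, k = (c1.support.toFinset ∩ c2.support.toFinset).card →
          ∃ T : Finset V, (T.card : ℝ) ≤ C * (k : ℝ) ^ ((8 : ℝ) / 5) ∧
            ∀ (w : V) (c : G.Walk w w), IsLongestCycle G c → ∃ x ∈ T, x ∈ c.support := by
  refine ⟨100, by norm_num, ?_⟩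
  intro V _ _ G _ hG u v c1 c2 h1 h2 k hk
  classical
  obtain ⟨S, hS, hmin⟩ := Finset.exists_min_image
    (Finset.univ.filter (fun S => VSep G c1.support.toFinset c2.support.toFinset S)) Finset.card
    ⟨c1.support.toFinset, by
      rw [Finset.mem_filter]
      exact ⟨Finset.mem_univ _, fun W s t hW hs _ => ⟨s, hW.start_mem, hs⟩⟩⟩
  have hS' : VSep G c1.support.toFinset c2.support.toFinset S := (Finset.mem_filter.1 hS).2
  have hl := menger (G := G) (A := c1.support.toFinset) (B := c2.support.toFinset) S.card
    (fun S' h => hmin S' (Finset.mem_filter.2 ⟨Finset.mem_univ _, h⟩))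
  obtain ⟨m, hN, hm, -⟩ := walk_bound h1 h2 hl
  have hpos := meet hG h1 h2
  rw [← hk] at hN hm hpos
  refine ⟨S, real_bound hpos hN hm, ?_⟩
  intro w c hc
  obtain ⟨x, hx⟩ := Finset.card_pos.1 (meet hG h1 hc)
  obtain ⟨y, hy⟩ := Finset.card_pos.1 (meet hG h2 hc)
  rw [Finset.mem_inter] at hx hy
  obtain ⟨W, hW, hp⟩ := cyc_link hc.1 hx.2 hy.2
  obtain ⟨z, hz, hzS⟩ := hS' W x y hp hx.1 hy.1
  exact ⟨z, hzS, List.mem_toFinset.1 (hW hz)⟩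
end

section
/- Let C1 and C2 be two longest cycles in a finite simple graph G, let x be the vertex set of a connected component of the graph obtained from C1 by deleting the vertices of C2, and let y be the vertex set of a connected component of the graph obtained from C2 by deleting the vertices of C1. Then there do not exist two paths P and P' in G such that: P and P' are vertex-disjoint from each other; each of P and P' has one endpoint in x and the other endpoint in y; and no internal vertex of P or P' lies in V(C1) ∪ V(C2). -/
open SimpleGraph

lemma aux_path_append {V : Type} {G : SimpleGraph V} {u v w : V} {p : G.Walk u v} {q : G.Walk v w}
    (hp : p.IsPath) (hq : q.IsPath) (h : ∀ z ∈ p.support, z ∈ q.support → z = v) :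
    (p.append q).IsPath := by
  rw [Walk.isPath_def, Walk.support_append, List.nodup_append']
  refine ⟨hp.support_nodup, hq.support_nodup.tail, ?_⟩
  intro z hz hz'
  have h1 := h z hz (List.mem_of_mem_tail hz')
  subst h1
  have := hq.support_nodup
  rw [← Walk.cons_tail_support, List.nodup_cons] at this
  exact this.1 hz'

lemma aux_cycle {V : Type} {G : SimpleGraph V} {u v : V} {p : G.Walk u v} {q : G.Walk v u}
    (hp : p.IsPath) (hq : q.IsPath) (h : ∀ z ∈ p.support, z ∈ q.support → z = u ∨ z = v)
    (hl : 1 < p.length) : (p.append q).IsCycle := by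
  refine hp.isCycle_append hq ?_ (Or.inl hl)
  intro z hz hz'
  have h2 := hq.support_nodup
  rw [← Walk.cons_tail_support, List.nodup_cons] at h2
  have h3 := hp.support_nodup
  rw [← Walk.cons_tail_support, List.nodup_cons] at h3
  rcases h z (List.mem_of_mem_tail hz) (List.mem_of_mem_tail hz') with rfl | rfl
  · exact h3.1 hz
  · exact h2.1 hz'

lemma aux_quad {V : Type} {G : SimpleGraph V} {a1 a2 b1 b2 : V} {q : G.Walk a1 a2}
    {r : G.Walk b1 b2} {p1 : G.Walk a1 b1} {p2 : G.Walk a2 b2}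
    (hq : q.IsPath) (hr : r.IsPath) (hp1 : p1.IsPath) (hp2 : p2.IsPath)
    (ha : a1 ≠ a2) (hab : a2 ≠ b2)
    (h1 : ∀ z ∈ q.support, z ∈ p2.support → z = a2)
    (h2 : ∀ z ∈ q.support, z ∉ r.support)
    (h3 : ∀ z ∈ q.support, z ∈ p1.support → z = a1)
    (h4 : ∀ z ∈ p2.support, z ∈ r.support → z = b2)
    (h5 : ∀ z ∈ p1.support, z ∉ p2.support)
    (h6 : ∀ z ∈ p1.support, z ∈ r.support → z = b1) :
    ∃ c : G.Walk a1 a1, c.IsCycle ∧ c.length = q.length + r.length + p1.length + p2.length := by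
  refine ⟨(q.append p2).append (r.reverse.append p1.reverse), aux_cycle
    (aux_path_append hq hp2 h1) (aux_path_append hr.reverse hp1.reverse ?_) ?_ ?_, ?_⟩
  · intro z hz hz'
    simp only [Walk.support_reverse, List.mem_reverse] at hz hz'
    exact h6 z hz' hz
  · intro z hz hz'
    simp only [Walk.mem_support_append_iff, Walk.support_reverse, List.mem_reverse] at hz hz'
    grind
  · have := Walk.length_eq_zero_iff.not.mpr (Walk.not_nil_of_ne (p := q) ha)
    have := Walk.length_eq_zero_iff.not.mpr (Walk.not_nil_of_ne (p := p2) hab)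
    rw [Walk.length_append]
    omega
  · simp only [Walk.length_append, Walk.length_reverse]
    omega

lemma aux_arc {V : Type} {G : SimpleGraph V} {u : V} (c : G.Walk u u) (hc : c.IsCycle) (S : Set V)
    (K : ((c.toSubgraph.deleteVerts S).coe).ConnectedComponent) (a b : V)
    (ha : a ∈ Subtype.val '' K.supp) (hb : b ∈ Subtype.val '' K.supp) (hab : a ≠ b) :
    ∃ q r : G.Walk a b, q.IsPath ∧ r.IsPath ∧ q.length + r.length = c.length ∧
      (∀ z ∈ q.support, z ∈ c.support ∧ z ∉ S) ∧ (∀ z ∈ r.support, z ∈ c.support) := by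
  classical
  obtain ⟨a', ha', rfl⟩ := ha
  obtain ⟨b', hb', rfl⟩ := hb
  have hreach : (c.toSubgraph.deleteVerts S).coe.Reachable b' a' := by
    rw [ConnectedComponent.mem_supp_iff] at ha' hb'
    exact ConnectedComponent.exact (hb'.trans ha'.symm)
  have hmem : ∀ t : (c.toSubgraph.deleteVerts S).verts, t.1 ∈ c.support ∧ t.1 ∉ S := by
    intro t
    have : t.1 ∈ c.toSubgraph.verts \ S := t.2
    exact ⟨(Walk.mem_verts_toSubgraph _).1 this.1, this.2⟩
  obtain ⟨d, hd⟩ : ∃ d, d = c.rotate a'.1 (hmem a').1 := ⟨_, rfl⟩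
  have hdc : d.IsCycle := by rw [hd]; exact hc.rotate _
  have hdl : d.length = c.length := by rw [hd]; simp
  have hds : ∀ z, z ∈ d.support ↔ z ∈ c.support := by intro z; rw [hd]; simp
  have hadj : ∀ s t, c.toSubgraph.Adj s t → d.toSubgraph.Adj s t := by
    intro s t h
    rw [hd, Walk.toSubgraph_rotate]; exact h
  obtain ⟨k, hk, hkl⟩ := Walk.mem_support_iff_exists_getVert.1 ((hds b'.1).2 (hmem b').1)
  have hk0 : k ≠ 0 := by rintro rfl; simp at hk; exact hab hk
  have hkn : k < d.length := by
    rcases hkl.lt_or_eq with h | h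
    · exact h
    · subst h; simp at hk; exact absurd hk hab
  have hinj : ∀ i j, i < d.length → j < d.length → d.getVert i = d.getVert j → i = j := by
    intro i j hi hj h
    exact hdc.getVert_injOn' (by simp only [Set.mem_ofPred_eq]; omega)
      (by simp only [Set.mem_ofPred_eq]; omega) h
  have hlast : d.getVert d.length = d.getVert 0 := by simp
  -- one side avoids S
  have key : (∀ i, i ≤ k → d.getVert i ∉ S) ∨ (∀ j, k ≤ j → j ≤ d.length → d.getVert j ∉ S) := by
    by_contra hcon
    push Not at hcon
    obtain ⟨⟨i, hik, hi⟩, j, hkj, hjn, hj⟩ := hcon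
    have inv : ∀ s t : (c.toSubgraph.deleteVerts S).verts,
        (c.toSubgraph.deleteVerts S).coe.Walk s t →
        (∃ m, i < m ∧ m < j ∧ d.getVert m = s.1) → ∃ m, i < m ∧ m < j ∧ d.getVert m = t.1 := by
      intro s t w
      induction w with
      | nil => exact id
      | @cons s s' t h w ih =>
        rintro ⟨m, hm1, hm2, hm⟩
        apply ih
        have h' : c.toSubgraph.Adj s.1 s'.1 := by
          rw [Subgraph.coe_adj, Subgraph.deleteVerts_adj] at h
          tauto
        have hs' := (hmem s').2
        obtain ⟨t', ht, htl⟩ := (Walk.toSubgraph_adj_iff _).1 (hadj _ _ h')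
        rw [Sym2.eq_iff] at ht
        rcases ht with ⟨e1, e2⟩ | ⟨e1, e2⟩
        · have : t' = m := hinj _ _ htl (by omega) (e1.trans hm.symm)
          subst this
          refine ⟨t' + 1, by omega, ?_, e2⟩
          by_contra hlt
          have : t' + 1 = j := by omega
          subst this
          exact hs' (e2 ▸ hj)
        · have : t' + 1 = m := by
            rcases Nat.lt_or_ge (t' + 1) d.length with hl | hl
            · exact hinj _ _ hl (by omega) (e2.trans hm.symm)
            · have e : t' + 1 = d.length := by omega
              rw [e, hlast] at e2
              have := hinj 0 m (by omega) (by omega) (e2.trans hm.symm)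
              omega
          subst this
          refine ⟨t', ?_, by omega, e1⟩
          by_contra hlt
          have : t' = i := by omega
          subst this
          exact hs' (e1 ▸ hi)
    obtain ⟨w⟩ := hreach
    have hb := (hmem b').2
    obtain ⟨m, hm1, hm2, hm⟩ := inv _ _ w ⟨k, by
      rcases hik.lt_or_eq with h | h
      · exact h
      · subst h; exact absurd (hk ▸ hi) hb, by
      rcases hkj.lt_or_eq with h | h
      · exact h
      · subst h; exact absurd (hk ▸ hj) hb, hk⟩
    have := hinj m 0 (by omega) (by omega) (by simpa using hm)
    omega
  have hqs : ∀ z ∈ (d.take k).support, ∃ i, i ≤ k ∧ d.getVert i = z := by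
    intro z hz
    obtain ⟨n, hn, -⟩ := Walk.mem_support_iff_exists_getVert.1 hz
    rw [Walk.take_getVert] at hn
    exact ⟨_, Nat.min_le_left _ _, hn⟩
  have hrs : ∀ z ∈ (d.drop k).reverse.support, ∃ i, k ≤ i ∧ i ≤ d.length ∧ d.getVert i = z := by
    intro z hz
    rw [Walk.support_reverse, List.mem_reverse] at hz
    obtain ⟨n, hn, hnl⟩ := Walk.mem_support_iff_exists_getVert.1 hz
    rw [Walk.drop_getVert] at hn
    rw [Walk.drop_length] at hnl
    exact ⟨_, by omega, by omega, hn⟩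
  have hq : (d.take k).IsPath := hdc.isPath_take hkn
  have hr : (d.drop k).reverse.IsPath := (hdc.isPath_drop (by omega)).reverse
  have hlq : (d.take k).length = k := by rw [Walk.take_length]; omega
  have hlr : (d.drop k).reverse.length = d.length - k := by
    rw [Walk.length_reverse, Walk.drop_length]
  have hqc : ∀ z ∈ (d.take k).support, z ∈ c.support := by
    intro z hz
    obtain ⟨i, -, rfl⟩ := hqs z hz
    exact (hds _).1 (Walk.getVert_mem_support _ _)
  have hrc : ∀ z ∈ (d.drop k).reverse.support, z ∈ c.support := by
    intro z hz
    obtain ⟨i, -, -, rfl⟩ := hrs z hz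
    exact (hds _).1 (Walk.getVert_mem_support _ _)
  rw [← hk]
  rcases key with key | key
  · refine ⟨_, _, hq, hr, by omega, fun z hz => ⟨hqc z hz, ?_⟩, hrc⟩
    obtain ⟨i, hi, rfl⟩ := hqs z hz
    exact key i hi
  · refine ⟨_, _, hr, hq, by omega, fun z hz => ⟨hrc z hz, ?_⟩, hqc⟩
    obtain ⟨i, hi, hi', rfl⟩ := hrs z hz
    exact key i hi hi'

theorem no_two_disjoint_paths_between_components
    (V : Type) [Fintype V] (G : SimpleGraph V)
    (u v : V) (c1 : G.Walk u u) (c2 : G.Walk v v)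
    (h1 : IsLongestCycle G c1) (h2 : IsLongestCycle G c2)
    (x y : Set V)
    -- `x` is the vertex set of a connected component of the cycle `c1` minus `V(c2)`:
    (hx : ∃ K : ((c1.toSubgraph.deleteVerts {w | w ∈ c2.support}).coe).ConnectedComponent,
      x = Subtype.val '' K.supp)
    -- `y` is the vertex set of a connected component of the cycle `c2` minus `V(c1)`:
    (hy : ∃ K : ((c2.toSubgraph.deleteVerts {w | w ∈ c1.support}).coe).ConnectedComponent,
      y = Subtype.val '' K.supp) :
    ¬ ∃ (a1 b1 a2 b2 : V) (p1 : G.Walk a1 b1) (p2 : G.Walk a2 b2),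
        p1.IsPath ∧ p2.IsPath ∧
        a1 ∈ x ∧ b1 ∈ y ∧ a2 ∈ x ∧ b2 ∈ y ∧
        -- `p1` and `p2` are vertex-disjoint from each other:
        (∀ z ∈ p1.support, z ∉ p2.support) ∧
        -- no internal vertex of `p1` or `p2` lies in `V(c1) ∪ V(c2)`:
        (∀ z ∈ p1.support, z ≠ a1 → z ≠ b1 → z ∉ c1.support ∧ z ∉ c2.support) ∧
        (∀ z ∈ p2.support, z ≠ a2 → z ≠ b2 → z ∉ c1.support ∧ z ∉ c2.support) := by
  rintro ⟨a1, b1, a2, b2, p1, p2, hp1, hp2, ha1, hb1, ha2, hb2, hd, hi1, hi2⟩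
  obtain ⟨K, rfl⟩ := hx
  obtain ⟨L, rfl⟩ := hy
  have ha : a1 ≠ a2 := by
    rintro rfl
    exact hd _ p1.start_mem_support p2.start_mem_support
  have hb : b1 ≠ b2 := by
    rintro rfl
    exact hd _ p1.end_mem_support p2.end_mem_support
  obtain ⟨q, q', hq, hq', hql, hqs, hqs'⟩ := aux_arc c1 h1.1 _ K a1 a2 ha1 ha2 ha
  obtain ⟨r, r', hr, hr', hrl, hrs, hrs'⟩ := aux_arc c2 h2.1 _ L b1 b2 hb1 hb2 hb
  simp only [Set.mem_ofPred_eq] at hqs hrs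
  have m1 := hqs _ q.start_mem_support
  have m2 := hqs _ q.end_mem_support
  have n1 := hrs _ r.start_mem_support
  have n2 := hrs _ r.end_mem_support
  have hab1 : a1 ≠ b1 := by rintro rfl; exact m1.2 n1.1
  have hab2 : a2 ≠ b2 := by rintro rfl; exact m2.2 n2.1
  have s1 := p1.start_mem_support
  have s2 := p2.start_mem_support
  have e1 := p1.end_mem_support
  have e2 := p2.end_mem_support
  have hlen := Walk.length_eq_zero_iff.not.mpr (Walk.not_nil_of_ne (p := p1) hab1)
  obtain ⟨C, hC, hCl⟩ := aux_quad hq hr' hp1 hp2 ha hab2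
    (by grind) (by grind) (by grind) (by grind) hd (by grind)
  obtain ⟨D, hD, hDl⟩ := aux_quad hq' hr hp1 hp2 ha hab2
    (by grind) (by grind) (by grind) (by grind) hd (by grind)
  have t1 := h1.2 _ C hC
  have t2 := h1.2 _ D hD
  have t3 := h1.2 _ c2 h2.1
  have t4 := h2.2 _ c1 h1.1
  omega
end
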